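/- arXiv:1303.7291 — 2 statements merged into one kernel-verified Lean document; each statement's English description precedes it below -/
import Mathlib

section
/- Fix integers n ≥ 1 and k with 1 ≤ k ≤ n, let x̃ ∈ ℝⁿ be k-sparse nonnegative, σ > 0 and C_w > 0, and let g ∈ ℝᵐ and h ∈ ℝⁿ be random vectors with i.i.d. standard normal entries, mutually independent. Then the random variable ξ(σ, g, h, x̃) is integrable and satisfies the Gaussian concentration inequality: for every t > 0, P( |ξ(σ, g, h, x̃) − E[ξ(σ, g, h, x̃)]| ≥ t ) ≤ 2·exp( −t²/(2·(2·C_w² + σ²)) ). -/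
open MeasureTheory ProbabilityTheory

noncomputable def e2norm {d : ℕ} (x : Fin d → ℝ) : ℝ := Real.sqrt (∑ i, x i ^ 2)

noncomputable def l1norm {d : ℕ} (x : Fin d → ℝ) : ℝ := ∑ i, |x i|

def kSparseNonneg (n k : ℕ) (x : Fin n → ℝ) : Prop :=
  (∀ i : Fin n, (i : ℕ) < n - k → x i = 0) ∧ ∀ i, 0 ≤ x i

/-- Product Gaussian measure on (g, h). -/
noncomputable def muGH (m n : ℕ) : Measure ((Fin m → ℝ) × (Fin n → ℝ)) :=
  (Measure.pi fun _ : Fin m => gaussianReal 0 1).prod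
    (Measure.pi fun _ : Fin n => gaussianReal 0 1)

/-- ξ(σ, g, h, x̃) as a function of the Gaussian pair (g, h). -/
noncomputable def xiFun (m n : ℕ) (σ Cw : ℝ) (xt : Fin n → ℝ)
    (p : (Fin m → ℝ) × (Fin n → ℝ)) : ℝ :=
  sInf ((fun w : Fin n → ℝ =>
      Real.sqrt (e2norm w ^ 2 + σ ^ 2) * e2norm p.1 + ∑ i, p.2 i * w i) ''
    {w : Fin n → ℝ | e2norm w ≤ Cw ∧ l1norm (xt + w) ≤ l1norm xt})


lemma bm_add (A B C : Set ℝ) (hA : MeasurableSet A) (hB : MeasurableSet B)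
    (hAn : A.Nonempty) (hBn : B.Nonempty) 
    (h : ∀ x ∈ A, ∀ y ∈ B, x + y ∈ C) : volume A + volume B ≤ volume C := by
  have key : ∀ K : Set ℝ, K ⊆ A → IsCompact K → K.Nonempty → ∀ K' : Set ℝ, K' ⊆ B → IsCompact K' →
      K'.Nonempty → volume K + volume K' ≤ volume C := by
    intro K hKA hK hKn K' hKB hK' hKn'
    obtain ⟨a, ha, hamax⟩ := hK.exists_isMaxOn hKn continuousOn_id
    obtain ⟨b, hb, hbmin⟩ := hK'.exists_isMinOn hKn' continuousOn_id
    have h1 : volume ((fun x => x - b) ⁻¹' K) = volume K := by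
      simp [sub_eq_add_neg]
    have h2 : volume ((fun x => x - a) ⁻¹' K') = volume K' := by
      simp [sub_eq_add_neg]
    have hd : AEDisjoint volume ((fun x => x - b) ⁻¹' K) ((fun x => x - a) ⁻¹' K') := by
      refine measure_mono_null (t := {a + b}) ?_ (by simp)
      rintro x ⟨hx1, hx2⟩
      have e1 : x - b ≤ a := hamax hx1
      have e2 : b ≤ x - a := hbmin hx2
      simp only [Set.mem_singleton_iff]; linarith
    rw [← h1, ← h2, ← measure_union₀ ((hK'.measurableSet.preimage (by fun_prop)).nullMeasurableSet) hd]
    refine measure_mono ?_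
    rintro x (hx | hx)
    · have := h _ (hKA hx) _ (hKB hb); simpa using this
    · have := h _ (hKA ha) _ (hKB hx); simpa using this
  refine le_trans (add_le_add (b := ⨆ K, ⨆ (_ : K ⊆ A ∧ IsCompact K ∧ K.Nonempty), volume K) (d := ⨆ K, ⨆ (_ : K ⊆ B ∧ IsCompact K ∧ K.Nonempty), volume K) ?_ ?_) ?_
  · rw [hA.measure_eq_iSup_isCompact]
    refine iSup_le fun K => iSup_le fun hK => iSup_le fun hK' => ?_
    rcases K.eq_empty_or_nonempty with rfl | hn
    · simp
    · exact le_iSup₂_of_le K ⟨hK, hK', hn⟩ le_rfl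
  · rw [hB.measure_eq_iSup_isCompact]
    refine iSup_le fun K => iSup_le fun hK => iSup_le fun hK' => ?_
    rcases K.eq_empty_or_nonempty with rfl | hn
    · simp
    · exact le_iSup₂_of_le K ⟨hK, hK', hn⟩ le_rfl
  · refine ENNReal.biSup_add_biSup_le' ?_ ?_ ?_
    · obtain ⟨x, hx⟩ := hAn
      exact ⟨{x}, by simpa using hx, isCompact_singleton, by simp⟩
    · obtain ⟨x, hx⟩ := hBn
      exact ⟨{x}, by simpa using hx, isCompact_singleton, by simp⟩
    · rintro K ⟨h1, h2, h3⟩ K' ⟨h1', h2', h3'⟩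
      exact key K h1 h2 h3 K' h1' h2' h3'

lemma bm_conv (A B C : Set ℝ) (hA : MeasurableSet A) (hB : MeasurableSet B)
    (hAn : A.Nonempty) (hBn : B.Nonempty) (s : ℝ) (hs : 0 < s) (hs1 : s < 1)
    (h : ∀ x ∈ A, ∀ y ∈ B, s * x + (1 - s) * y ∈ C) :
    ENNReal.ofReal s * volume A + ENNReal.ofReal (1 - s) * volume B ≤ volume C := by
  have sc : ∀ (r : ℝ) (hr : 0 < r) (D : Set ℝ), volume ((fun x => r⁻¹ * x) ⁻¹' D) = ENNReal.ofReal r * volume D := by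
    intro r hr D
    rw [Real.volume_preimage_mul_left (inv_ne_zero hr.ne')]
    simp [abs_of_pos hr]
  have hs2 : 0 < 1 - s := by linarith
  rw [← sc s hs, ← sc (1 - s) hs2]
  refine bm_add _ _ _ (hA.preimage (by fun_prop)) (hB.preimage (by fun_prop)) ?_ ?_ ?_
  · obtain ⟨x, hx⟩ := hAn
    exact ⟨s * x, by simpa [hs.ne'] using hx⟩
  · obtain ⟨x, hx⟩ := hBn
    exact ⟨(1 - s) * x, by simpa [hs2.ne'] using hx⟩
  · intro x hx y hy
    have := h _ hx _ hy
    simpa [hs.ne', hs2.ne'] using this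

lemma pl_norm (f g h : ℝ → ℝ) (hf : Measurable f) (hg : Measurable g) (hh : Measurable h)
    (f0 : ∀ x, 0 ≤ f x) (g0 : ∀ x, 0 ≤ g x) (h0 : ∀ x, 0 ≤ h x)
    (f1 : ∀ x, f x ≤ 1) (g1 : ∀ x, g x ≤ 1)
    (fs : ∀ t < 1, ∃ x, t < f x) (gs : ∀ t < 1, ∃ x, t < g x)
    (s : ℝ) (hs : 0 < s) (hs1 : s < 1)
    (H : ∀ x y, f x ^ s * g y ^ (1 - s) ≤ h (s * x + (1 - s) * y)) :
    ENNReal.ofReal s * (∫⁻ x, ENNReal.ofReal (f x)) + ENNReal.ofReal (1 - s) * ∫⁻ x, ENNReal.ofReal (g x)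
      ≤ ∫⁻ x, ENNReal.ofReal (h x) := by
  have hs2 : 0 < 1 - s := by linarith
  have lc : ∀ u : ℝ → ℝ, Measurable u → (∀ x, 0 ≤ u x) → 
      ∫⁻ x, ENNReal.ofReal (u x) = ∫⁻ t in Set.Ioi 0, volume {x | t < u x} := fun u hu u0 =>
    lintegral_eq_lintegral_meas_lt _ (Filter.Eventually.of_forall u0) hu.aemeasurable
  have mm : ∀ u : ℝ → ℝ, Measurable (fun t : ℝ => volume {x | t < u x}) := fun u =>
    Antitone.measurable fun a b hab => measure_mono fun x hx => lt_of_le_of_lt hab hx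
  rw [lc f hf f0, lc g hg g0, lc h hh h0, ← lintegral_const_mul _ (mm f), ← lintegral_const_mul _ (mm g),
    ← lintegral_add_left ((mm f).const_mul _)]
  refine setLIntegral_mono (mm h) ?_
  intro t ht
  rcases lt_or_ge t 1 with h1 | h1
  · refine bm_conv _ _ _ (measurableSet_lt measurable_const hf) (measurableSet_lt measurable_const hg)
      (fs t h1) (gs t h1) s hs hs1 ?_
    intro x hx y hy
    refine lt_of_lt_of_le ?_ (H x y)
    have ht' : (0:ℝ) < t := ht
    calc t = t ^ s * t ^ (1 - s) := by rw [← Real.rpow_add ht']; simp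
      _ < _ := by
        have a1 := Real.rpow_lt_rpow ht'.le hx hs
        have a2 := Real.rpow_lt_rpow ht'.le hy hs2
        have := Real.rpow_pos_of_pos ht' s
        have := Real.rpow_pos_of_pos ht' (1-s)
        exact mul_lt_mul'' a1 a2 (by positivity) (by positivity)
  · have e1 : {x | t < f x} = ∅ := by
      ext x; simp; linarith [f1 x]
    have e2 : {x | t < g x} = ∅ := by
      ext x; simp; linarith [g1 x]
    simp [e1, e2]

lemma pl_bdd (f g h : ℝ → ℝ) (hf : Measurable f) (hg : Measurable g) (hh : Measurable h)
    (f0 : ∀ x, 0 ≤ f x) (g0 : ∀ x, 0 ≤ g x) (h0 : ∀ x, 0 ≤ h x) (N : ℝ)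
    (f1 : ∀ x, f x ≤ N) (g1 : ∀ x, g x ≤ N)
    (s : ℝ) (hs : 0 < s) (hs1 : s < 1)
    (H : ∀ x y, f x ^ s * g y ^ (1 - s) ≤ h (s * x + (1 - s) * y)) :
    (∫⁻ x, ENNReal.ofReal (f x)) ^ s * (∫⁻ x, ENNReal.ofReal (g x)) ^ (1 - s)
      ≤ ∫⁻ x, ENNReal.ofReal (h x) := by
  have hs2 : 0 < 1 - s := by linarith
  have bf : BddAbove (Set.range f) := ⟨N, by rintro _ ⟨x, rfl⟩; exact f1 x⟩
  have bg : BddAbove (Set.range g) := ⟨N, by rintro _ ⟨x, rfl⟩; exact g1 x⟩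
  set a := ⨆ x, f x with ha
  set b := ⨆ x, g x with hb
  have fa : ∀ x, f x ≤ a := fun x => le_ciSup bf x
  have gb : ∀ x, g x ≤ b := fun x => le_ciSup bg x
  have a0 : 0 ≤ a := (f0 0).trans (fa 0)
  have b0 : 0 ≤ b := (g0 0).trans (gb 0)
  rcases a0.eq_or_lt with a0 | a0
  · have : ∀ x, f x = 0 := fun x => le_antisymm (a0 ▸ fa x) (f0 x)
    simp [this, hs]
  rcases b0.eq_or_lt with b0 | b0
  · have : ∀ x, g x = 0 := fun x => le_antisymm (b0 ▸ gb x) (g0 x)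
    simp [this, hs2]
  set c := a ^ s * b ^ (1 - s) with hc
  have c0 : 0 < c := by positivity
  have P := pl_norm (fun x => f x / a) (fun x => g x / b) (fun x => h x / c) (hf.div_const _)
    (hg.div_const _) (hh.div_const _) (fun x => div_nonneg (f0 x) a0.le) (fun x => div_nonneg (g0 x) b0.le)
    (fun x => div_nonneg (h0 x) c0.le) (fun x => (div_le_one a0).2 (fa x)) (fun x => (div_le_one b0).2 (gb x))
    (by
      intro t ht
      have : t * a < a := by nlinarith
      obtain ⟨x, hx⟩ := exists_lt_of_lt_ciSup this
      exact ⟨x, (lt_div_iff₀ a0).2 hx⟩)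
    (by
      intro t ht
      have : t * b < b := by nlinarith
      obtain ⟨x, hx⟩ := exists_lt_of_lt_ciSup this
      exact ⟨x, (lt_div_iff₀ b0).2 hx⟩) s hs hs1
    (by
      intro x y
      rw [Real.div_rpow (f0 x) a0.le, Real.div_rpow (g0 y) b0.le, div_mul_div_comm]
      exact div_le_div_of_nonneg_right (H x y) c0.le)
  have sc : ∀ (u : ℝ → ℝ) (r : ℝ) , Measurable u → 0 < r → 
      ∫⁻ x, ENNReal.ofReal (u x) = ENNReal.ofReal r * ∫⁻ x, ENNReal.ofReal (u x / r) := by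
    intro u r hu hr
    rw [← lintegral_const_mul _ (by fun_prop)]
    refine lintegral_congr fun x => ?_
    rw [← ENNReal.ofReal_mul hr.le, mul_div_cancel₀ _ hr.ne']
  rw [sc f a hf a0, sc g b hg b0, sc h c hh c0, ENNReal.mul_rpow_of_nonneg _ _ hs.le,
    ENNReal.mul_rpow_of_nonneg _ _ hs2.le, mul_mul_mul_comm]
  have : ENNReal.ofReal a ^ s * ENNReal.ofReal b ^ (1 - s) = ENNReal.ofReal c := by
    rw [hc, ENNReal.ofReal_mul (by positivity), ENNReal.ofReal_rpow_of_pos a0, ENNReal.ofReal_rpow_of_pos b0]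
  rw [this]
  gcongr
  refine le_trans ?_ P
  have Y := ENNReal.young_inequality ((∫⁻ x, ENNReal.ofReal (f x / a))^s) ((∫⁻ x, ENNReal.ofReal (g x / b))^(1-s))
    (p := s⁻¹) (q := (1-s)⁻¹) ⟨by simp, by positivity, by positivity⟩
  refine Y.trans (le_of_eq ?_)
  rw [← ENNReal.rpow_mul, ← ENNReal.rpow_mul, mul_inv_cancel₀ hs.ne', mul_inv_cancel₀ hs2.ne',
    ENNReal.ofReal_inv_of_pos hs, ENNReal.ofReal_inv_of_pos hs2]
  simp [div_eq_mul_inv, mul_comm]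

/-- Property tau. -/
def TauP {E : Type*} [MeasurableSpace E] (s : ℝ) (μ : Measure E) (c : E → E → ℝ) : Prop :=
  ∀ f g : E → ENNReal, Measurable f → Measurable g →
    (∀ x y, f x ^ s * g y ^ (1 - s) ≤ ENNReal.ofReal (Real.exp (s * (1 - s) / 2 * c x y))) →
    (∫⁻ x, f x ∂μ) ^ s * (∫⁻ x, g x ∂μ) ^ (1 - s) ≤ 1

lemma tau_gauss (s : ℝ) (hs : 0 < s) (hs1 : s < 1) :
    TauP s (gaussianReal 0 1) (fun x y => (x - y) ^ 2) := by
  intro f g hf hg H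
  have hs2 : 0 < 1 - s := by linarith
  have key : ∀ N : ℕ, (∫⁻ x, min (f x) N ∂(gaussianReal 0 1)) ^ s *
      (∫⁻ x, min (g x) N ∂(gaussianReal 0 1)) ^ (1 - s) ≤ 1 := by
    intro N
    have conv : ∀ u : ℝ → ENNReal, Measurable u → ∫⁻ x, min (u x) N ∂(gaussianReal 0 1) =
        ∫⁻ x, ENNReal.ofReal ((min (u x) N).toReal * gaussianPDFReal 0 1 x) := by
      intro u hu
      rw [gaussianReal_of_var_ne_zero 0 one_ne_zero, lintegral_withDensity_eq_lintegral_mul _ (by fun_prop) (by fun_prop)]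
      refine lintegral_congr fun x => ?_
      rw [ENNReal.ofReal_mul (by positivity), ENNReal.ofReal_toReal (by simp), mul_comm]
      rfl
    rw [conv f hf, conv g hg, ← lintegral_gaussianPDFReal_eq_one 0 (v := 1) one_ne_zero]
    have pp : ∀ x, 0 < gaussianPDFReal 0 1 x := fun x => gaussianPDFReal_pos 0 1 x one_ne_zero
    have bd : ∀ (u : ℝ → ENNReal) x, (min (u x) N).toReal * gaussianPDFReal 0 1 x ≤ N * (√(2 * Real.pi))⁻¹ := by
      intro u x
      refine mul_le_mul ?_ ?_ (pp x).le (by positivity)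
      · exact ENNReal.toReal_le_of_le_ofReal (by positivity) (by simp)
      · rw [gaussianPDFReal]
        have : Real.exp (-(x - 0) ^ 2 / (2 * (1:NNReal))) ≤ 1 := by
          rw [Real.exp_le_one_iff]
          have : 0 ≤ (x-0)^2 := by positivity
          simp; nlinarith
        simpa using mul_le_of_le_one_right (a := (√(2 * Real.pi))⁻¹) (by positivity) this
    refine pl_bdd _ _ _ (by fun_prop) (by fun_prop) (by fun_prop) (fun x => mul_nonneg (by positivity) (pp x).le)
      (fun x => mul_nonneg (by positivity) (pp x).le) (fun x => (pp x).le) _ (bd f) (bd g) s hs hs1 ?_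
    intro x y
    rw [Real.mul_rpow (by positivity) (pp x).le, Real.mul_rpow (by positivity) (pp y).le, mul_mul_mul_comm]
    have e1 : (min (f x) N).toReal ^ s * (min (g y) N).toReal ^ (1 - s) ≤ Real.exp (s * (1 - s) / 2 * (x - y) ^ 2) := by
      rw [ENNReal.toReal_rpow, ENNReal.toReal_rpow, ← ENNReal.toReal_mul]
      refine ENNReal.toReal_le_of_le_ofReal (by positivity) (le_trans ?_ (H x y))
      gcongr <;> exact min_le_left _ _
    have e2 : gaussianPDFReal 0 1 x ^ s * gaussianPDFReal 0 1 y ^ (1 - s) = 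
        Real.exp (-(s * (1 - s) / 2 * (x - y) ^ 2)) * gaussianPDFReal 0 1 (s * x + (1 - s) * y) := by
      simp only [gaussianPDFReal]
      rw [Real.mul_rpow (by positivity) (by positivity), Real.mul_rpow (by positivity) (by positivity),
        mul_mul_mul_comm, ← Real.rpow_add (by positivity), ← Real.exp_mul, ← Real.exp_mul, ← Real.exp_add,
        mul_left_comm, ← Real.exp_add]
      simp only [add_sub_cancel, Real.rpow_one]
      congr 2
      simp; ring
    rw [e2]
    calc _ ≤ Real.exp (s * (1 - s) / 2 * (x - y) ^ 2) * (Real.exp (-(s * (1 - s) / 2 * (x - y) ^ 2)) * gaussianPDFReal 0 1 (s * x + (1 - s) * y)) := by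
          have := pp (s * x + (1 - s) * y)
          gcongr
      _ = _ := by rw [← mul_assoc, ← Real.exp_add]; simp
  have tend : ∀ u : ℝ → ENNReal, Measurable u → Filter.Tendsto (fun N : ℕ => ∫⁻ x, min (u x) N ∂(gaussianReal 0 1))
      Filter.atTop (nhds (∫⁻ x, u x ∂(gaussianReal 0 1))) := by
    intro u hu
    refine lintegral_tendsto_of_tendsto_of_monotone (fun n => by fun_prop) ?_ ?_
    · refine Filter.Eventually.of_forall fun x a b hab => ?_
      simp only
      gcongr
    · refine Filter.Eventually.of_forall fun x => ?_
      have := (tendsto_const_nhds (x := u x)).min ENNReal.tendsto_nat_nhds_top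
      simpa using this
  by_cases hf0 : ∫⁻ x, f x ∂(gaussianReal 0 1) = 0
  · simp [hf0, hs]
  by_cases hg0 : ∫⁻ x, g x ∂(gaussianReal 0 1) = 0
  · simp [hg0, hs2]
  refine le_of_tendsto' (ENNReal.Tendsto.mul ((tend f hf).ennrpow_const s) (Or.inl ?_) ((tend g hg).ennrpow_const (1 - s)) (Or.inl ?_)) key
  · simp [ENNReal.rpow_eq_zero_iff, hf0, hs.le, hs.not_gt]
  · simp [ENNReal.rpow_eq_zero_iff, hg0, hs2.le]; intro _; linarith

lemma tau_prod {E F : Type*} [MeasurableSpace E] [MeasurableSpace F] (s : ℝ) (hs : 0 < s) (hs1 : s < 1)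
    (μ : Measure E) (ν : Measure F) [SFinite μ] [SFinite ν] (c : E → E → ℝ) (d : F → F → ℝ)
    (h1 : TauP s μ c) (h2 : TauP s ν d) :
    TauP s (μ.prod ν) (fun p q => c p.1 q.1 + d p.2 q.2) := by
  intro f g hf hg H
  rw [lintegral_prod _ hf.aemeasurable, lintegral_prod _ hg.aemeasurable]
  refine h1 _ _ hf.lintegral_prod_right' hg.lintegral_prod_right' ?_
  intro x y
  set κ := s * (1 - s) / 2 with hκ
  have scal : ∀ z : ENNReal, (z * ENNReal.ofReal (Real.exp (-(κ * c x y) / s))) ^ s = z ^ s * ENNReal.ofReal (Real.exp (-(κ * c x y))) := by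
    intro z
    rw [ENNReal.mul_rpow_of_nonneg _ _ hs.le, ENNReal.ofReal_rpow_of_pos (Real.exp_pos _), ← Real.exp_mul,
      div_mul_cancel₀ _ hs.ne']
  have fx : Measurable fun x' => f (x, x') := hf.comp measurable_prodMk_left
  have gy : Measurable fun x' => g (y, x') := hg.comp measurable_prodMk_left
  have := h2 (fun x' => f (x, x') * ENNReal.ofReal (Real.exp (-(κ * c x y) / s))) (fun y' => g (y, y'))
    (fx.mul_const _) gy ?_
  · rw [lintegral_mul_const _ fx, scal] at this
    calc _ = ((∫⁻ x', f (x, x') ∂ν) ^ s * ENNReal.ofReal (Real.exp (-(κ * c x y))) * (∫⁻ y', g (y, y') ∂ν) ^ (1 - s)) * ENNReal.ofReal (Real.exp (κ * c x y)) := by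
          have e : ENNReal.ofReal (Real.exp (-(κ * c x y))) * ENNReal.ofReal (Real.exp (κ * c x y)) = 1 := by
            rw [← ENNReal.ofReal_mul (by positivity), ← Real.exp_add]; simp
          rw [mul_right_comm _ (ENNReal.ofReal _), mul_assoc, e, mul_one]
      _ ≤ 1 * ENNReal.ofReal (Real.exp (κ * c x y)) := by gcongr
      _ = _ := one_mul _
  · intro x' y'
    rw [scal, mul_right_comm]
    calc _ ≤ ENNReal.ofReal (Real.exp (κ * (c x y + d x' y'))) * ENNReal.ofReal (Real.exp (-(κ * c x y))) := by
          gcongr; exact H (x, x') (y, y')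
      _ = _ := by
          rw [← ENNReal.ofReal_mul (by positivity), ← Real.exp_add]; congr 2; ring

lemma tau_pi (s : ℝ) (hs : 0 < s) (hs1 : s < 1) (n : ℕ) :
    TauP s (Measure.pi fun _ : Fin n => gaussianReal 0 1) (fun x y => ∑ i, (x i - y i) ^ 2) := by
  induction n with
  | zero =>
    intro f g hf hg H
    rw [Measure.pi_of_empty _ (fun i => i.elim0), lintegral_dirac' _ hf, lintegral_dirac' _ hg]
    simpa using H (fun i => i.elim0) (fun i => i.elim0)
  | succ n ih =>
    intro f g hf hg H
    have mp := (measurePreserving_piFinSuccAbove (fun _ : Fin (n + 1) => gaussianReal 0 1) 0).symm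
    rw [← mp.lintegral_comp hf, ← mp.lintegral_comp hg]
    refine tau_prod s hs hs1 _ _ _ _ (tau_gauss s hs hs1) ih _ _ (hf.comp mp.measurable) (hg.comp mp.measurable) ?_
    intro p q
    refine (H _ _).trans (le_of_eq ?_)
    simp only []
    rw [Fin.sum_univ_succ]
    simp [MeasurableEquiv.piFinSuccAbove]

lemma tau_mgf {E : Type*} [MeasurableSpace E] (μ : Measure E) [IsProbabilityMeasure μ] (c : E → E → ℝ)
    (c0 : ∀ x y, 0 ≤ c x y)
    (T : ∀ s : ℝ, 0 < s → s < 1 → TauP s μ c) (G : E → ℝ) (hG : Measurable G) (hGi : Integrable G μ)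
    (hG0 : ∫ x, G x ∂μ = 0) (M : ℝ) (hL : ∀ x y, G x - G y ≤ M * √(c x y)) :
    ∫⁻ x, ENNReal.ofReal (Real.exp (G x)) ∂μ ≤ ENNReal.ofReal (Real.exp (M ^ 2 / 2)) := by
  have key : ∀ s : ℝ, 0 < s → s < 1 → 
      ∫⁻ x, ENNReal.ofReal (Real.exp (G x)) ∂μ ≤ ENNReal.ofReal (Real.exp (M ^ 2 / (2 * (1 - s)))) := by
    intro s hs hs1
    have hs2 : 0 < 1 - s := by linarith
    set K := M ^ 2 / (2 * (1 - s)) with hK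
    set a := s / (1 - s) with ha
    have A := T s hs hs1 (fun x => ENNReal.ofReal (Real.exp (G x)) * ENNReal.ofReal (Real.exp (-K)))
      (fun x => ENNReal.ofReal (Real.exp (-(a * G x)))) (by fun_prop) (by fun_prop) ?_
    · have B : 1 ≤ ∫⁻ x, ENNReal.ofReal (Real.exp (-(a * G x))) ∂μ := by
        have i1 : Integrable (fun x => 1 - a * G x) μ := (integrable_const 1).sub (hGi.const_mul a)
        have e1 : ∫ x, (1 - a * G x) ∂μ = 1 := by
          rw [integral_sub (integrable_const 1) (hGi.const_mul a), integral_const_mul, hG0]; simp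
        have i2 : Integrable (fun x => max (1 - a * G x) 0) μ := i1.pos_part
        calc (1 : ENNReal) = ENNReal.ofReal (∫ x, (1 - a * G x) ∂μ) := by rw [e1]; simp
          _ ≤ ENNReal.ofReal (∫ x, max (1 - a * G x) 0 ∂μ) :=
            ENNReal.ofReal_le_ofReal (integral_mono i1 i2 fun x => le_max_left _ _)
          _ = ∫⁻ x, ENNReal.ofReal (max (1 - a * G x) 0) ∂μ :=
            ofReal_integral_eq_lintegral_ofReal i2 (Filter.Eventually.of_forall fun x => le_max_right _ _)
          _ ≤ _ := by
            refine lintegral_mono fun x => ENNReal.ofReal_le_ofReal (max_le ?_ (Real.exp_pos _).le)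
            linarith [Real.add_one_le_exp (-(a * G x))]
      rw [lintegral_mul_const _ (by fun_prop)] at A
      have C : ((∫⁻ x, ENNReal.ofReal (Real.exp (G x)) ∂μ) * ENNReal.ofReal (Real.exp (-K))) ^ s ≤ 1 := by
        refine le_trans ?_ A
        refine le_mul_of_one_le_right' ?_
        exact ENNReal.one_le_rpow B hs2
      have D : (∫⁻ x, ENNReal.ofReal (Real.exp (G x)) ∂μ) * ENNReal.ofReal (Real.exp (-K)) ≤ 1 := by
        by_contra hcon
        exact absurd C (not_le.2 (ENNReal.one_lt_rpow (not_le.1 hcon) hs))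
      have e : ENNReal.ofReal (Real.exp (-K)) * ENNReal.ofReal (Real.exp K) = 1 := by
        rw [← ENNReal.ofReal_mul (by positivity), ← Real.exp_add]; simp
      calc _ = ((∫⁻ x, ENNReal.ofReal (Real.exp (G x)) ∂μ) * ENNReal.ofReal (Real.exp (-K))) * ENNReal.ofReal (Real.exp K) := by
            rw [mul_assoc, e, mul_one]
        _ ≤ 1 * ENNReal.ofReal (Real.exp K) := by gcongr
        _ = _ := one_mul _
    · intro x y
      rw [← ENNReal.ofReal_mul (by positivity), ← Real.exp_add, ENNReal.ofReal_rpow_of_pos (by positivity),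
        ENNReal.ofReal_rpow_of_pos (by positivity), ← Real.exp_mul, ← Real.exp_mul, ← ENNReal.ofReal_mul (by positivity),
        ← Real.exp_add]
      refine ENNReal.ofReal_le_ofReal (Real.exp_le_exp.2 ?_)
      have h1 := hL x y
      have h2 := Real.sq_sqrt (c0 x y)
      set r := √(c x y)
      have e1 : -(a * G y) * (1 - s) = - s * G y := by rw [ha]; field_simp
      have e2 : M * r - K ≤ (1 - s) / 2 * r ^ 2 := by
        have : (1 - s) / 2 * r ^ 2 - (M * r - K) = ((1 - s) * r - M) ^ 2 / (2 * (1 - s)) := by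
          rw [hK]; field_simp; ring
        have : 0 ≤ ((1 - s) * r - M) ^ 2 / (2 * (1 - s)) := by positivity
        linarith
      rw [e1, ← h2]
      nlinarith
  have tend : Filter.Tendsto (fun n : ℕ => ENNReal.ofReal (Real.exp (M ^ 2 / (2 * (1 - 1 / ((n : ℝ) + 1))))))
      Filter.atTop (nhds (ENNReal.ofReal (Real.exp (M ^ 2 / 2)))) := by
    have h0 : Filter.Tendsto (fun n : ℕ => 1 / ((n : ℝ) + 1)) Filter.atTop (nhds 0) := tendsto_one_div_add_atTop_nhds_zero_nat
    have h1 : Filter.Tendsto (fun n : ℕ => M ^ 2 / (2 * (1 - 1 / ((n : ℝ) + 1)))) Filter.atTop (nhds (M ^ 2 / (2 * (1 - 0)))) :=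
      Filter.Tendsto.div tendsto_const_nhds ((h0.const_sub 1).const_mul 2) (by norm_num)
    simp only [sub_zero, mul_one] at h1
    exact ENNReal.tendsto_ofReal ((Real.continuous_exp.tendsto _).comp h1)
  refine ge_of_tendsto tend ?_
  filter_upwards [Filter.eventually_gt_atTop 0] with n hn
  have : (0:ℝ) < n := by exact_mod_cast hn
  exact key _ (by positivity) (by rw [div_lt_one (by positivity)]; linarith)

lemma tau_tail {E : Type*} [MeasurableSpace E] (μ : Measure E) [IsProbabilityMeasure μ] (c : E → E → ℝ)
    (c0 : ∀ x y, 0 ≤ c x y)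
    (T : ∀ s : ℝ, 0 < s → s < 1 → TauP s μ c) (G : E → ℝ) (hG : Measurable G) (hGi : Integrable G μ)
    (hG0 : ∫ x, G x ∂μ = 0) (L : ℝ) (hL0 : 0 < L) (hL : ∀ x y, G x - G y ≤ L * √(c x y)) (t : ℝ) (ht : 0 < t) :
    μ {x | t ≤ G x} ≤ ENNReal.ofReal (Real.exp (-t ^ 2 / (2 * L ^ 2))) := by
  set l := t / L ^ 2 with hl
  have l0 : 0 < l := by positivity
  have A := tau_mgf μ c c0 T (fun x => l * G x) (by fun_prop) (hGi.const_mul l)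
    (by rw [integral_const_mul, hG0, mul_zero]) (l * L) (by
      intro x y
      rw [← mul_sub, mul_assoc]
      exact mul_le_mul_of_nonneg_left (hL x y) l0.le)
  have B := mul_meas_ge_le_lintegral (μ := μ) (f := fun x => ENNReal.ofReal (Real.exp (l * G x))) (by fun_prop)
    (ENNReal.ofReal (Real.exp (l * t)))
  have sub : {x | t ≤ G x} ⊆ {x | ENNReal.ofReal (Real.exp (l * t)) ≤ ENNReal.ofReal (Real.exp (l * G x))} := by
    intro x hx
    exact ENNReal.ofReal_le_ofReal (Real.exp_le_exp.2 (mul_le_mul_of_nonneg_left hx l0.le))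
  have C : ENNReal.ofReal (Real.exp (l * t)) * μ {x | t ≤ G x} ≤ ENNReal.ofReal (Real.exp ((l * L) ^ 2 / 2)) :=
    (mul_le_mul_right (measure_mono sub) _).trans (B.trans A)
  have e : ENNReal.ofReal (Real.exp (-(l * t))) * ENNReal.ofReal (Real.exp (l * t)) = 1 := by
    rw [← ENNReal.ofReal_mul (by positivity), ← Real.exp_add]; simp
  calc _ = ENNReal.ofReal (Real.exp (-(l * t))) * (ENNReal.ofReal (Real.exp (l * t)) * μ {x | t ≤ G x}) := by
        rw [← mul_assoc, e, one_mul]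
    _ ≤ ENNReal.ofReal (Real.exp (-(l * t))) * ENNReal.ofReal (Real.exp ((l * L) ^ 2 / 2)) := by gcongr
    _ = _ := by
      rw [← ENNReal.ofReal_mul (by positivity), ← Real.exp_add]
      congr 2
      rw [hl]; field_simp; ring

lemma e2norm_eq {d : ℕ} (x : Fin d → ℝ) : e2norm x = ‖(WithLp.toLp 2 x : EuclideanSpace ℝ (Fin d))‖ := by
  simp [e2norm, EuclideanSpace.norm_eq]

lemma inner_bound {d : ℕ} (h w : Fin d → ℝ) : |∑ i, h i * w i| ≤ e2norm h * e2norm w := by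
  rw [e2norm_eq, e2norm_eq]
  have := abs_real_inner_le_norm (WithLp.toLp 2 w : EuclideanSpace ℝ (Fin d)) (WithLp.toLp 2 h)
  rw [mul_comm]
  simpa [PiLp.inner_apply] using this

lemma e2norm_sub_le {d : ℕ} (x y : Fin d → ℝ) : e2norm x - e2norm y ≤ e2norm (x - y) := by
  rw [e2norm_eq, e2norm_eq, e2norm_eq]
  exact norm_sub_norm_le _ _

lemma e2norm_nonneg {d : ℕ} (x : Fin d → ℝ) : 0 ≤ e2norm x := Real.sqrt_nonneg _

/-- Squared distance. -/
noncomputable def costGH (m n : ℕ) (p q : (Fin m → ℝ) × (Fin n → ℝ)) : ℝ :=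
  ∑ i, (p.1 i - q.1 i) ^ 2 + ∑ i, (p.2 i - q.2 i) ^ 2

lemma cost_eq (m n : ℕ) (p q : (Fin m → ℝ) × (Fin n → ℝ)) :
    costGH m n p q = e2norm (p.1 - q.1) ^ 2 + e2norm (p.2 - q.2) ^ 2 := by
  rw [e2norm, e2norm, Real.sq_sqrt (by positivity), Real.sq_sqrt (by positivity)]
  rfl

lemma cost_nonneg (m n : ℕ) (p q : (Fin m → ℝ) × (Fin n → ℝ)) : 0 ≤ costGH m n p q := by
  rw [costGH]; positivity

lemma xi_lip (m n : ℕ) (xt : Fin n → ℝ) (σ Cw : ℝ) (hσ : 0 < σ) (hCw : 0 < Cw)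
    (p q : (Fin m → ℝ) × (Fin n → ℝ)) :
    xiFun m n σ Cw xt p - xiFun m n σ Cw xt q ≤ √(2 * Cw ^ 2 + σ ^ 2) * √(costGH m n p q) := by
  rw [sub_le_comm]
  refine le_csInf ?_ ?_
  · refine Set.Nonempty.image _ ⟨0, ?_, ?_⟩
    · simp [e2norm, hCw.le]
    · simp
  rintro _ ⟨w, hw, rfl⟩
  have bdd : BddBelow ((fun w : Fin n → ℝ =>
      Real.sqrt (e2norm w ^ 2 + σ ^ 2) * e2norm p.1 + ∑ i, p.2 i * w i) ''
    {w : Fin n → ℝ | e2norm w ≤ Cw ∧ l1norm (xt + w) ≤ l1norm xt}) := by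
    refine ⟨-(e2norm p.2 * Cw), ?_⟩
    rintro _ ⟨v, hv, rfl⟩
    have h1 := neg_le_of_abs_le (inner_bound p.2 v)
    have h2 := mul_nonneg (Real.sqrt_nonneg (e2norm v ^ 2 + σ ^ 2)) (e2norm_nonneg p.1)
    have h3 := mul_le_mul_of_nonneg_left hv.1 (e2norm_nonneg p.2)
    simp only
    linarith
  have h0 : xiFun m n σ Cw xt p ≤ _ := csInf_le bdd ⟨w, hw, rfl⟩
  simp only at h0 ⊢
  have h1 : ∑ i, p.2 i * w i - ∑ i, q.2 i * w i ≤ e2norm (p.2 - q.2) * e2norm w := by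
    refine le_trans (le_of_eq ?_) (le_of_abs_le (inner_bound (p.2 - q.2) w))
    rw [← Finset.sum_sub_distrib]
    exact Finset.sum_congr rfl fun i _ => by simp; ring
  set r := √(e2norm w ^ 2 + σ ^ 2) with hr
  have r2 : r ^ 2 = e2norm w ^ 2 + σ ^ 2 := Real.sq_sqrt (by positivity)
  have r0 : 0 ≤ r := Real.sqrt_nonneg _
  have h2 : r * e2norm p.1 - r * e2norm q.1 ≤ r * e2norm (p.1 - q.1) := by
    rw [← mul_sub]; exact mul_le_mul_of_nonneg_left (e2norm_sub_le _ _) r0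
  have h3 : r * e2norm (p.1 - q.1) + e2norm (p.2 - q.2) * e2norm w ≤ √(2 * Cw ^ 2 + σ ^ 2) * √(costGH m n p q) := by
    rw [← Real.sqrt_mul (by positivity)]
    refine Real.le_sqrt_of_sq_le ?_
    rw [cost_eq]
    have hw2 : e2norm w ^ 2 ≤ Cw ^ 2 := pow_le_pow_left₀ (e2norm_nonneg w) hw.1 2
    set A := e2norm (p.1 - q.1)
    set B := e2norm (p.2 - q.2)
    set z := e2norm w
    calc (r * A + B * z) ^ 2 ≤ (r ^ 2 + z ^ 2) * (A ^ 2 + B ^ 2) := by nlinarith [sq_nonneg (r * B - z * A)]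
      _ ≤ _ := by
        rw [r2]; exact mul_le_mul_of_nonneg_right (by linarith) (by positivity)
  linarith

lemma cost_symm (m n : ℕ) (p q : (Fin m → ℝ) × (Fin n → ℝ)) : costGH m n p q = costGH m n q p := by
  simp only [costGH]
  congr 1 <;> exact Finset.sum_congr rfl fun i _ => by ring

instance muGH_prob (m n : ℕ) : IsProbabilityMeasure (muGH m n) := by
  rw [muGH]; infer_instance

lemma xi_cont (m n : ℕ) (xt : Fin n → ℝ) (σ Cw : ℝ) (hσ : 0 < σ) (hCw : 0 < Cw) :
    Continuous (xiFun m n σ Cw xt) := by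
  rw [continuous_iff_continuousAt]
  intro q
  rw [ContinuousAt, tendsto_iff_dist_tendsto_zero]
  have ht : Filter.Tendsto (fun p => √(2 * Cw ^ 2 + σ ^ 2) * √(costGH m n p q)) (nhds q) (nhds 0) := by
    have : Continuous (fun p => √(2 * Cw ^ 2 + σ ^ 2) * √(costGH m n p q)) := by
      unfold costGH; fun_prop
    have h := this.tendsto q
    simpa [costGH] using h
  refine squeeze_zero (fun _ => dist_nonneg) (fun p => ?_) ht
  rw [Real.dist_eq, abs_le]
  constructor
  · have := xi_lip m n xt σ Cw hσ hCw q p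
    rw [cost_symm] at this; linarith
  · exact xi_lip m n xt σ Cw hσ hCw p q

lemma e2norm_le {d : ℕ} (x : Fin d → ℝ) : e2norm x ^ 2 ≤ (∑ i, |x i|) ^ 2 := by
  rw [e2norm, Real.sq_sqrt (by positivity)]
  simpa using Finset.sum_sq_le_sq_sum_of_nonneg (s := Finset.univ) (f := fun i => |x i|) (fun i _ => abs_nonneg _)

lemma xi_int (m n : ℕ) (xt : Fin n → ℝ) (σ Cw : ℝ) (hσ : 0 < σ) (hCw : 0 < Cw) :
    Integrable (xiFun m n σ Cw xt) (muGH m n) := by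
  have hx : Integrable (fun x : ℝ => x) (gaussianReal 0 1) := (memLp_id_gaussianReal 1).integrable le_rfl
  have hp : ∀ d (i : Fin d), Integrable (fun x : Fin d → ℝ => |x i|) (Measure.pi fun _ : Fin d => gaussianReal 0 1) := by
    intro d i
    exact ((measurePreserving_eval (fun _ : Fin d => gaussianReal 0 1) i).integrable_comp_of_integrable hx).abs
  have h1 : Integrable (fun p : (Fin m → ℝ) × (Fin n → ℝ) => ∑ i, |p.1 i|) (muGH m n) :=
    integrable_finset_sum _ fun i _ => (hp m i).comp_fst _
  have h2 : Integrable (fun p : (Fin m → ℝ) × (Fin n → ℝ) => ∑ i, |p.2 i|) (muGH m n) :=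
    integrable_finset_sum _ fun i _ => (hp n i).comp_snd _
  refine Integrable.mono' (((h1.add h2).const_mul (√(2 * Cw ^ 2 + σ ^ 2))).add (integrable_const |xiFun m n σ Cw xt 0|))
    (xi_cont m n xt σ Cw hσ hCw).aestronglyMeasurable (Filter.Eventually.of_forall fun p => ?_)
  have a1 := xi_lip m n xt σ Cw hσ hCw p 0
  have a2 := xi_lip m n xt σ Cw hσ hCw 0 p
  rw [cost_symm] at a2
  have a3 : √(costGH m n p 0) ≤ ∑ i, |p.1 i| + ∑ i, |p.2 i| := by
    have s1 : 0 ≤ ∑ i, |p.1 i| := by positivity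
    have s2 : 0 ≤ ∑ i, |p.2 i| := by positivity
    refine Real.sqrt_le_iff.2 ⟨by positivity, ?_⟩
    rw [cost_eq]
    have := e2norm_le p.1
    have := e2norm_le p.2
    simp only [Prod.fst_zero, Prod.snd_zero, sub_zero]
    nlinarith
  have a4 := mul_le_mul_of_nonneg_left a3 (Real.sqrt_nonneg (2 * Cw ^ 2 + σ ^ 2))
  have b1 := le_abs_self (xiFun m n σ Cw xt 0)
  have b2 := neg_abs_le (xiFun m n σ Cw xt 0)
  simp only [Pi.add_apply, Real.norm_eq_abs]
  rw [abs_le]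
  constructor <;> linarith

theorem lasso_stmt11 (m n k : ℕ) (hm : 1 ≤ m) (hn : 1 ≤ n) (hk1 : 1 ≤ k) (hkn : k ≤ n)
    (xt : Fin n → ℝ) (hxt : kSparseNonneg n k xt)
    (σ Cw : ℝ) (hσ : 0 < σ) (hCw : 0 < Cw) :
    Integrable (xiFun m n σ Cw xt) (muGH m n) ∧
    ∀ t : ℝ, 0 < t →
      muGH m n {p | t ≤ |xiFun m n σ Cw xt p - ∫ q, xiFun m n σ Cw xt q ∂(muGH m n)|}
        ≤ ENNReal.ofReal (2 * Real.exp (-t ^ 2 / (2 * (2 * Cw ^ 2 + σ ^ 2)))) := by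
  have hI := xi_int m n xt σ Cw hσ hCw
  have hM := (xi_cont m n xt σ Cw hσ hCw).measurable
  have hL := xi_lip m n xt σ Cw hσ hCw
  refine ⟨hI, fun t ht => ?_⟩
  have T : ∀ s : ℝ, 0 < s → s < 1 → TauP s (muGH m n) (costGH m n) := fun s hs hs1 =>
    tau_prod s hs hs1 _ _ _ _ (tau_pi s hs hs1 m) (tau_pi s hs hs1 n)
  set F := xiFun m n σ Cw xt with hF
  set e := ∫ q, F q ∂(muGH m n) with he
  set L := √(2 * Cw ^ 2 + σ ^ 2) with hLd
  have L0 : 0 < L := Real.sqrt_pos.2 (by positivity)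
  have L2 : L ^ 2 = 2 * Cw ^ 2 + σ ^ 2 := Real.sq_sqrt (by positivity)
  have t1 := tau_tail (muGH m n) (costGH m n) (cost_nonneg m n) T (fun p => F p - e) (hM.sub_const _)
    (hI.sub (integrable_const e)) (by rw [integral_sub hI (integrable_const e)]; simp [he]) L L0
    (fun p q => by have := hL p q; linarith) t ht
  have t2 := tau_tail (muGH m n) (costGH m n) (cost_nonneg m n) T (fun p => e - F p) (hM.const_sub _)
    ((integrable_const e).sub hI) (by rw [integral_sub (integrable_const e) hI]; simp [he]) L L0
    (fun p q => by have := hL q p; rw [cost_symm] at this; linarith) t ht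
  rw [L2] at t1 t2
  calc _ ≤ muGH m n ({p | t ≤ F p - e} ∪ {p | t ≤ e - F p}) := by
        refine measure_mono fun p hp => ?_
        rcases le_abs.1 (show t ≤ |F p - e| from hp) with h | h
        · exact Or.inl h
        · right; simp only [Set.mem_setOf_eq]; linarith
    _ ≤ _ := measure_union_le _ _
    _ ≤ _ := add_le_add t1 t2
    _ = _ := by
      rw [← ENNReal.ofReal_add (by positivity) (by positivity)]; ring_nf
end

section
/- Fix integers m, n ≥ 1 and k with 1 ≤ k ≤ n, let x̃ ∈ ℝⁿ be k-sparse nonnegative, σ > 0 and C_w > 0. Let A be a random m×n matrix with i.i.d. standard normal N(0,1) entries and let v ∈ ℝᵐ be a random vector, independent of A, with i.i.d. N(0, σ²) entries. Set y = A·x̃ + v and ζ_obj(A, v) = inf { ‖y − A·x‖₂ : x ∈ ℝⁿ, ‖x‖₁ ≤ ‖x̃‖₁ }. Let g ∈ ℝᵐ, h ∈ ℝⁿ be independent standard normal vectors and assume E[ξ(σ, g, h, x̃)] ≥ 0. Assume moreover that, for some ε_C > 0, with probability at least 1 − e^{−ε_C·n} some minimizer x̂ of ζ_obj satisfies ‖x̂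 − x̃‖₂ ≤ C_w. Then for all ε₁, ε₂, ε₃ ∈ (0,1): P( ζ_obj(A, v) ≥ (1 − ε₁)·E[ξ(σ, g, h, x̃)] − (ε₂ + ε₃)·√n ) ≥ 1 − 2·exp( −(ε₁·E[ξ(σ, g, h, x̃)])²/(2·(2·C_w² + σ²)) ) − exp( −ε₂²·n/(2·σ²) ) − exp( −ε₃²·n/(2·(C_w² + σ²)) ) − e^{−ε_C·n}. -/
open MeasureTheory ProbabilityTheory

/-- Product Gaussian measure on (A, v): A has i.i.d. N(0,1) entries, v has i.i.d. N(0,σ²) entries. -/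
noncomputable def muAv (m n : ℕ) (σ : ℝ) :
    Measure ((Fin m → Fin n → ℝ) × (Fin m → ℝ)) :=
  (Measure.pi fun _ : Fin m => Measure.pi fun _ : Fin n => gaussianReal 0 1).prod
    (Measure.pi fun _ : Fin m => gaussianReal 0 (σ ^ 2).toNNReal)

/-- ‖y − A·x‖₂ with y = A·x̃ + v, for the sample ω = (A, v). -/
noncomputable def lassoVal (m n : ℕ) (xt : Fin n → ℝ)
    (ω : (Fin m → Fin n → ℝ) × (Fin m → ℝ)) (x : Fin n → ℝ) : ℝ :=
  e2norm (fun i => ((∑ j, ω.1 i j * xt j) + ω.2 i) - ∑ j, ω.1 i j * x j)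

/-- ζ_obj(A, v): the optimal value of the LASSO (1.9). -/
noncomputable def zetaObj (m n : ℕ) (xt : Fin n → ℝ)
    (ω : (Fin m → Fin n → ℝ) × (Fin m → ℝ)) : ℝ :=
  sInf {r : ℝ | ∃ x : Fin n → ℝ, l1norm x ≤ l1norm xt ∧ r = lassoVal m n xt ω x}

noncomputable abbrev PG (ι : Type) [Fintype ι] : Measure (ι → ℝ) :=
  Measure.pi fun _ : ι => gaussianReal 0 1

lemma mp_update {ι : Type} [Fintype ι] [DecidableEq ι] (k : ι) :
    MeasurePreserving (fun p : (ι → ℝ) × ℝ => Function.update p.1 k p.2)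
      ((PG ι).prod (gaussianReal 0 1)) (PG ι) := by
  have hm : Measurable (fun p : (ι → ℝ) × ℝ => Function.update p.1 k p.2) := by
    rw [measurable_pi_iff]
    intro i
    by_cases h : i = k
    · subst h; simpa using measurable_snd
    · simp only [Function.update_of_ne h]; fun_prop
  refine ⟨hm, ?_⟩
  symm
  refine Measure.pi_eq fun s hs => ?_
  rw [Measure.map_apply hm (MeasurableSet.univ_pi hs)]
  have : (fun p : (ι → ℝ) × ℝ => Function.update p.1 k p.2) ⁻¹' Set.pi Set.univ s
      = (Set.pi Set.univ (Function.update s k Set.univ)) ×ˢ (s k) := by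
    ext p
    simp only [Set.mem_preimage, Set.mem_pi, Set.mem_univ, true_imp_iff, Set.mem_prod]
    constructor
    · intro h
      refine ⟨fun i => ?_, by simpa using h k⟩
      by_cases hi : i = k
      · subst hi; simp
      · have := h i; simpa [Function.update_of_ne hi] using this
    · rintro ⟨h1, h2⟩ i
      by_cases hi : i = k
      · subst hi; simpa using h2
      · have := h1 i; simpa [Function.update_of_ne hi] using this
  rw [this, Measure.prod_prod, Measure.pi_pi, ← Finset.mul_prod_erase _ _ (Finset.mem_univ k),
    ← Finset.mul_prod_erase _ (fun i => (gaussianReal 0 1) (s i)) (Finset.mem_univ k)]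
  simp only [Function.update_self, measure_univ, one_mul]
  rw [mul_comm]
  congr 1
  refine Finset.prod_congr rfl fun i hi => ?_
  rw [Function.update_of_ne (Finset.ne_of_mem_erase hi)]

lemma gauss_int_id : Integrable (fun x : ℝ => x) (gaussianReal 0 1) := by
  have := (memLp_id_gaussianReal (μ := 0) (v := 1) 1).integrable le_rfl
  exact this

lemma stein1 (g g' : ℝ → ℝ) (hg : ∀ x, HasDerivAt g (g' x) x) (hg' : Continuous g') (K : ℝ)
    (hK : ∀ x, |g x| ≤ K) (hK' : ∀ x, |g' x| ≤ K) :
    ∫ x, x * g x ∂(gaussianReal 0 1) = ∫ x, g' x ∂(gaussianReal 0 1) := by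
  have hgc : Continuous g := continuous_iff_continuousAt.2 fun x => (hg x).continuousAt
  have hd : ∀ x, HasDerivAt (gaussianPDFReal 0 1) (-x * gaussianPDFReal 0 1 x) x := by
    intro x
    unfold gaussianPDFReal
    have h1 : HasDerivAt (fun x : ℝ => -(x - 0) ^ 2 / (2 * ((1 : NNReal) : ℝ))) (-x) x := by
      have := (((hasDerivAt_id x).sub_const 0).pow 2).neg.div_const (2 * ((1 : NNReal) : ℝ))
      refine this.congr_deriv ?_
      simp; ring
    have := h1.exp.const_mul (√(2 * Real.pi * ((1 : NNReal) : ℝ)))⁻¹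
    refine this.congr_deriv ?_
    ring
  have i1 : Integrable (fun x => x * g x) (gaussianReal 0 1) := by
    refine (gauss_int_id.norm.mul_const K).mono' (by fun_prop) (ae_of_all _ fun x => ?_)
    simp only [norm_mul, Real.norm_eq_abs]
    exact mul_le_mul_of_nonneg_left (hK x) (abs_nonneg _)
  have i2 : Integrable g' (gaussianReal 0 1) :=
    (integrable_const K).mono' (by fun_prop) (ae_of_all _ fun x => hK' x)
  have i3 : Integrable g (gaussianReal 0 1) :=
    (integrable_const K).mono' (by fun_prop) (ae_of_all _ fun x => hK x)
  have conv : ∀ f : ℝ → ℝ, Integrable f (gaussianReal 0 1) →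
      Integrable (fun x => f x * gaussianPDFReal 0 1 x) := by
    intro f hf
    rw [gaussianReal_of_var_ne_zero _ (by simp)] at hf
    rw [integrable_withDensity_iff (measurable_gaussianPDF 0 1) (ae_of_all _ fun x => by
      simp [gaussianPDF])] at hf
    simpa [toReal_gaussianPDF] using hf
  rw [integral_gaussianReal_eq_integral_smul (by simp),
    integral_gaussianReal_eq_integral_smul (by simp)]
  have := integral_mul_deriv_eq_deriv_mul_of_integrable (u := g) (u' := g')
    (v := gaussianPDFReal 0 1) (v' := fun x => -x * gaussianPDFReal 0 1 x) 
    (fun x _ => hg x) (fun x _ => hd x) ?_ (conv _ i2) (conv _ i3)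
  · simp only [smul_eq_mul]
    rw [← neg_inj, ← integral_neg]
    calc _ = ∫ x, g x * (-x * gaussianPDFReal 0 1 x) := by congr 1; ext x; ring
      _ = _ := this
      _ = _ := by congr 1; congr 1; ext x; simp [mul_comm]
  · have := (conv _ i1).neg
    refine this.congr (ae_of_all _ fun x => ?_)
    simp; ring

lemma pg_int_coord {ι : Type} [Fintype ι] [DecidableEq ι] (k : ι) :
    Integrable (fun z : ι → ℝ => z k) (PG ι) := by
  have : MeasurePreserving (fun z : ι → ℝ => z k) (PG ι) (gaussianReal 0 1) :=
    measurePreserving_eval (fun _ : ι => gaussianReal 0 1) k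
  exact this.integrable_comp_of_integrable gauss_int_id

lemma ibp_coord {ι : Type} [Fintype ι] [DecidableEq ι] (k : ι) (H : (ι → ℝ) → ℝ)
    (hH : ContDiff ℝ 1 H) (K : ℝ) (hK : ∀ z, |H z| ≤ K)
    (hK' : ∀ z, |fderiv ℝ H z (Pi.single k 1)| ≤ K) :
    ∫ z, z k * H z ∂(PG ι) = ∫ z, fderiv ℝ H z (Pi.single k 1) ∂(PG ι) := by
  have hc := hH.continuous
  have hdc : Continuous fun z => fderiv ℝ H z (Pi.single k 1) :=
    (hH.continuous_fderiv (by simp)).clm_apply continuous_const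
  have i1 : Integrable (fun z => z k * H z) (PG ι) := by
    refine ((pg_int_coord k).norm.mul_const K).mono' (by fun_prop) (ae_of_all _ fun z => ?_)
    simp only [norm_mul, Real.norm_eq_abs]
    exact mul_le_mul_of_nonneg_left (hK z) (abs_nonneg _)
  have i2 : Integrable (fun z => fderiv ℝ H z (Pi.single k 1)) (PG ι) :=
    (integrable_const K).mono' (by fun_prop) (ae_of_all _ fun x => hK' x)
  have mp := mp_update (ι := ι) k
  have key : ∀ f : (ι → ℝ) → ℝ, Integrable f (PG ι) → ∫ z, f z ∂(PG ι) =
      ∫ z, ∫ x, f (Function.update z k x) ∂(gaussianReal 0 1) ∂(PG ι) := by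
    intro f hf
    conv_lhs => rw [← mp.map_eq]
    rw [integral_map mp.measurable.aemeasurable (by rw [mp.map_eq]; exact hf.1), integral_prod]
    exact mp.integrable_comp_of_integrable hf
  rw [key _ i1, key _ i2]
  congr 1; ext z
  have := stein1 (fun x => H (Function.update z k x))
    (fun x => fderiv ℝ H (Function.update z k x) (Pi.single k 1)) (fun x => ?_) ?_ K
    (fun x => hK _) (fun x => hK' _)
  · simpa using this
  · have h1 : HasDerivAt (fun x => Function.update z k x) (Pi.single k (1:ℝ)) x :=
      hasDerivAt_update z k x
    exact ((hH.differentiable (by simp)) _).hasFDerivAt.comp_hasDerivAt x h1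
  · exact hdc.comp (by fun_prop)

lemma ibp_dot {ι : Type} [Fintype ι] [DecidableEq ι] (c : ι → ℝ) (H : (ι → ℝ) → ℝ)
    (hH : ContDiff ℝ 1 H) (K : ℝ) (hK : ∀ z, |H z| ≤ K)
    (hK' : ∀ c : ι → ℝ, ∃ K, ∀ z, |fderiv ℝ H z c| ≤ K) :
    ∫ z, (c ⬝ᵥ z) * H z ∂(PG ι) = ∫ z, fderiv ℝ H z c ∂(PG ι) := by
  have hc := hH.continuous
  have hdc : ∀ c, Continuous fun z => fderiv ℝ H z c := fun c =>
    (hH.continuous_fderiv (by simp)).clm_apply continuous_const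
  have e1 : ∀ z, fderiv ℝ H z c = ∑ k, c k * fderiv ℝ H z (Pi.single k 1) := by
    intro z
    have : c = ∑ k, c k • (Pi.single k (1:ℝ) : ι → ℝ) := by
      ext i; simp [Finset.sum_apply, Pi.single_apply]
    conv_lhs => rw [this]
    simp [map_sum]
  simp_rw [e1, dotProduct, Finset.sum_mul, mul_assoc]
  rw [integral_finset_sum, integral_finset_sum]
  · refine Finset.sum_congr rfl fun k _ => ?_
    rw [integral_const_mul, integral_const_mul]
    obtain ⟨K', hK''⟩ := hK' (Pi.single k 1)
    rw [ibp_coord k H hH (max K K') (fun z => (hK z).trans (le_max_left _ _))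
      (fun z => (hK'' z).trans (le_max_right _ _))]
  · intro k _
    obtain ⟨K', hK''⟩ := hK' (Pi.single k 1)
    refine Integrable.const_mul ?_ _
    exact (integrable_const K').mono' (hdc _).aestronglyMeasurable (ae_of_all _ fun x => hK'' x)
  · intro k _
    refine Integrable.const_mul ?_ _
    refine ((pg_int_coord k).norm.mul_const K).mono' (by fun_prop) (ae_of_all _ fun z => ?_)
    simp only [norm_mul, Real.norm_eq_abs]
    exact mul_le_mul_of_nonneg_left (hK z) (abs_nonneg _)


section soft
variable {W I ι : Type} [Fintype W] [Nonempty W] [Fintype I] [Fintype ι]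

noncomputable def esum (β : ℝ) (ζ : W → ℝ) : ℝ := ∑ v, Real.exp (-β * ζ v)
noncomputable def soft (β : ℝ) (ζ : W → ℝ) : ℝ := -(1 / β) * Real.log (esum β ζ)
noncomputable def wt (β : ℝ) (ζ : W → ℝ) (w : W) : ℝ := Real.exp (-β * ζ w) / esum β ζ
noncomputable def NN (δ : ℝ) (x : I → ℝ) : ℝ := Real.sqrt (∑ i, x i ^ 2 + δ ^ 2)
noncomputable def nn (δ : ℝ) (x : I → ℝ) (i : I) : ℝ := x i / NN δ x

lemma esum_pos (β : ℝ) (ζ : W → ℝ) : 0 < esum β ζ :=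
  Finset.sum_pos (fun _ _ => Real.exp_pos _) Finset.univ_nonempty

lemma wt_nonneg (β : ℝ) (ζ : W → ℝ) (w : W) : 0 ≤ wt β ζ w :=
  div_nonneg (Real.exp_pos _).le (esum_pos β ζ).le

lemma wt_sum (β : ℝ) (ζ : W → ℝ) : ∑ w, wt β ζ w = 1 := by
  unfold wt
  rw [← Finset.sum_div]
  exact div_self (esum_pos β ζ).ne'

lemma wt_le_one (β : ℝ) (ζ : W → ℝ) (w : W) : wt β ζ w ≤ 1 := by
  rw [← wt_sum β ζ]
  exact Finset.single_le_sum (fun v _ => wt_nonneg β ζ v) (Finset.mem_univ w)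

lemma soft_le {β : ℝ} (hβ : 0 < β) (ζ : W → ℝ) (w : W) : soft β ζ ≤ ζ w := by
  unfold soft
  have h1 : Real.exp (-β * ζ w) ≤ esum β ζ :=
    Finset.single_le_sum (f := fun v => Real.exp (-β * ζ v)) (fun v _ => (Real.exp_pos _).le)
      (Finset.mem_univ w)
  have h2 : -β * ζ w ≤ Real.log (esum β ζ) := by
    rw [Real.le_log_iff_exp_le (esum_pos β ζ)]; exact h1
  rw [neg_mul, neg_le, ← sub_nonneg]
  have : 1 / β * Real.log (esum β ζ) - -ζ w = 1 / β * (Real.log (esum β ζ) - (-β * ζ w)) := by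
    field_simp
    try ring
  rw [this]
  exact mul_nonneg (by positivity) (by linarith)

lemma le_soft {β : ℝ} (hβ : 0 < β) (ζ : W → ℝ) (t : ℝ) (h : ∀ w, t ≤ ζ w) :
    t - Real.log (Fintype.card W) / β ≤ soft β ζ := by
  unfold soft
  have hc : (0:ℝ) < Fintype.card W := by exact_mod_cast Fintype.card_pos
  have h1 : esum β ζ ≤ Fintype.card W * Real.exp (-β * t) := by
    unfold esum
    calc _ ≤ ∑ v : W, Real.exp (-β * t) := by
          refine Finset.sum_le_sum fun v _ => Real.exp_le_exp.2 ?_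
          nlinarith [h v]
      _ = _ := by simp
  have h2 : Real.log (esum β ζ) ≤ Real.log (Fintype.card W) + -β * t := by
    have := Real.log_le_log (esum_pos β ζ) h1
    rwa [Real.log_mul hc.ne' (Real.exp_pos _).ne', Real.log_exp] at this
  have h3 := mul_le_mul_of_nonneg_left h2 (show 0 ≤ 1 / β by positivity)
  have h4 : 1 / β * (Real.log (Fintype.card W) + -β * t) = Real.log (Fintype.card W) / β - t := by
    field_simp
    try ring
  linarith

lemma NN_pos {δ : ℝ} (hδ : 0 < δ) (x : I → ℝ) : 0 < NN δ x :=
  Real.sqrt_pos.2 (by have := Finset.sum_nonneg (fun i (_ : i ∈ Finset.univ) => sq_nonneg (x i)); positivity)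

lemma NN_sq {δ : ℝ} (x : I → ℝ) : NN δ x ^ 2 = ∑ i, x i ^ 2 + δ ^ 2 :=
  Real.sq_sqrt (by have := Finset.sum_nonneg (fun i (_ : i ∈ Finset.univ) => sq_nonneg (x i)); positivity)

lemma NN_ge {δ : ℝ} (hδ : 0 < δ) (x : I → ℝ) : δ ≤ NN δ x := by
  apply Real.le_sqrt_of_sq_le
  have := Finset.sum_nonneg (fun i (_ : i ∈ Finset.univ) => sq_nonneg (x i))
  linarith

lemma nn_sq_sum {δ : ℝ} (hδ : 0 < δ) (x : I → ℝ) : ∑ i, nn δ x i ^ 2 ≤ 1 := by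
  unfold nn
  simp_rw [div_pow]
  rw [← Finset.sum_div, NN_sq, div_le_one]
  · nlinarith
  · rw [← NN_sq]; exact pow_pos (NN_pos hδ x) 2

lemma nn_abs {δ : ℝ} (hδ : 0 < δ) (x : I → ℝ) (i : I) : |nn δ x i| ≤ 1 := by
  have := nn_sq_sum hδ x
  have h2 := Finset.single_le_sum (f := fun i => nn δ x i ^ 2) (fun v _ => sq_nonneg _)
      (Finset.mem_univ i)
  exact (sq_le_one_iff_abs_le_one _).1 (h2.trans this)

lemma nn_inner {δ : ℝ} (hδ : 0 < δ) (x y : I → ℝ) : ∑ i, nn δ x i * nn δ y i ≤ 1 := by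
  have h1 := nn_sq_sum hδ x
  have h2 := nn_sq_sum hδ y
  have : ∑ i, nn δ x i * nn δ y i ≤ ∑ i, (nn δ x i ^ 2 + nn δ y i ^ 2) / 2 :=
    Finset.sum_le_sum fun i _ => by nlinarith [sq_nonneg (nn δ x i - nn δ y i)]
  rw [← Finset.sum_div, Finset.sum_add_distrib] at this
  linarith

lemma NN_deriv {δ : ℝ} (hδ : 0 < δ) {x : ℝ → I → ℝ} {x' : I → ℝ} {t : ℝ}
    (h : ∀ i, HasDerivAt (fun s => x s i) (x' i) t) :
    HasDerivAt (fun s => NN δ (x s)) (∑ i, nn δ (x t) i * x' i) t := by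
  have h1 : HasDerivAt (fun s => ∑ i, x s i ^ 2 + δ ^ 2) (∑ i, 2 * x t i * x' i) t := by
    have := (HasDerivAt.fun_sum (u := Finset.univ) (fun i _ => (h i).pow 2)).add_const (δ ^ 2)
    refine this.congr_deriv ?_
    simp
  have h2 := h1.sqrt (by rw [← NN_sq]; exact (pow_pos (NN_pos hδ (x t)) 2).ne')
  refine h2.congr_deriv ?_
  rw [Finset.sum_div]
  refine Finset.sum_congr rfl fun i _ => ?_
  have := (NN_pos hδ (x t)).ne'
  unfold nn
  change _ / (2 * NN δ (x t)) = _
  field_simp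

lemma nn_deriv {δ : ℝ} (hδ : 0 < δ) {x : ℝ → I → ℝ} {x' : I → ℝ} {t : ℝ}
    (h : ∀ i, HasDerivAt (fun s => x s i) (x' i) t) (i : I) :
    HasDerivAt (fun s => nn δ (x s) i)
      ((x' i - nn δ (x t) i * ∑ j, nn δ (x t) j * x' j) / NN δ (x t)) t := by
  have hN := (NN_pos hδ (x t)).ne'
  refine ((h i).div (NN_deriv hδ h) hN).congr_deriv ?_
  generalize (∑ j, nn δ (x t) j * x' j) = q
  unfold nn
  field_simp

lemma esum_deriv {β : ℝ} {ζ : ℝ → W → ℝ} {ζ' : W → ℝ} {t : ℝ}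
    (h : ∀ w, HasDerivAt (fun s => ζ s w) (ζ' w) t) :
    HasDerivAt (fun s => esum β (ζ s)) (-β * esum β (ζ t) * ∑ w, wt β (ζ t) w * ζ' w) t := by
  have := (HasDerivAt.fun_sum (u := Finset.univ) (fun w _ => ((h w).const_mul (-β)).exp))
  refine this.congr_deriv ?_
  rw [Finset.mul_sum]
  refine Finset.sum_congr rfl fun w _ => ?_
  unfold wt
  have := (esum_pos β (ζ t)).ne'
  field_simp

lemma soft_deriv {β : ℝ} (hβ : 0 < β) {ζ : ℝ → W → ℝ} {ζ' : W → ℝ} {t : ℝ}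
    (h : ∀ w, HasDerivAt (fun s => ζ s w) (ζ' w) t) :
    HasDerivAt (fun s => soft β (ζ s)) (∑ w, wt β (ζ t) w * ζ' w) t := by
  have he := (esum_pos β (ζ t)).ne'
  refine (((esum_deriv (β := β) h).log he).const_mul (-(1 / β))).congr_deriv ?_
  field_simp

lemma wt_deriv {β : ℝ} {ζ : ℝ → W → ℝ} {ζ' : W → ℝ} {t : ℝ}
    (h : ∀ w, HasDerivAt (fun s => ζ s w) (ζ' w) t) (w : W) :
    HasDerivAt (fun s => wt β (ζ s) w)
      (-β * wt β (ζ t) w * (ζ' w - ∑ v, wt β (ζ t) v * ζ' v)) t := by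
  have he := (esum_pos β (ζ t)).ne'
  refine (((h w).const_mul (-β)).exp.div (esum_deriv (β := β) h) he).congr_deriv ?_
  generalize (∑ j, wt β (ζ t) j * ζ' j) = q
  unfold wt
  field_simp
  try ring

noncomputable def Xv (a : W → I → ι → ℝ) (w : W) (z : ι → ℝ) : I → ℝ := fun i => a w i ⬝ᵥ z
noncomputable def Zv (δ : ℝ) (a : W → I → ι → ℝ) (b : W → ι → ℝ) (z : ι → ℝ) : W → ℝ :=
  fun w => NN δ (Xv a w z) + b w ⬝ᵥ z

lemma dot_contDiff (c : ι → ℝ) : ContDiff ℝ 1 (fun z : ι → ℝ => c ⬝ᵥ z) := by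
  unfold dotProduct; fun_prop

lemma NN_contDiff {δ : ℝ} (hδ : 0 < δ) (a : W → I → ι → ℝ) (w : W) :
    ContDiff ℝ 1 (fun z => NN δ (Xv a w z)) := by
  unfold NN
  refine ContDiff.sqrt ?_ fun z => ?_
  · unfold Xv
    have := fun i => dot_contDiff (a w i)
    fun_prop
  · rw [← NN_sq]; exact (pow_pos (NN_pos hδ _) 2).ne'

lemma Zv_contDiff {δ : ℝ} (hδ : 0 < δ) (a : W → I → ι → ℝ) (b : W → ι → ℝ) (w : W) :
    ContDiff ℝ 1 (fun z => Zv δ a b z w) :=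
  (NN_contDiff hδ a w).add (dot_contDiff _)

lemma esum_contDiff {δ : ℝ} (hδ : 0 < δ) (β : ℝ) (a : W → I → ι → ℝ) (b : W → ι → ℝ) :
    ContDiff ℝ 1 (fun z => esum β (Zv δ a b z)) := by
  unfold esum
  have := fun w => Zv_contDiff hδ a b w
  fun_prop

lemma wt_contDiff {δ : ℝ} (hδ : 0 < δ) (β : ℝ) (a : W → I → ι → ℝ) (b : W → ι → ℝ) (w : W) :
    ContDiff ℝ 1 (fun z => wt β (Zv δ a b z) w) := by
  unfold wt
  have := Zv_contDiff hδ a b w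
  exact ContDiff.div (by fun_prop) (esum_contDiff hδ β a b) fun z => (esum_pos _ _).ne'

lemma soft_contDiff {δ : ℝ} (hδ : 0 < δ) (β : ℝ) (a : W → I → ι → ℝ) (b : W → ι → ℝ) :
    ContDiff ℝ 1 (fun z => soft β (Zv δ a b z)) := by
  unfold soft
  exact contDiff_const.mul ((esum_contDiff hδ β a b).log fun z => (esum_pos _ _).ne')

lemma nn_contDiff {δ : ℝ} (hδ : 0 < δ) (a : W → I → ι → ℝ) (w : W) (i : I) :
    ContDiff ℝ 1 (fun z => nn δ (Xv a w z) i) := by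
  unfold nn
  refine ContDiff.div ?_ (NN_contDiff hδ a w) fun z => (NN_pos hδ _).ne'
  exact dot_contDiff _

lemma fd_line {H : (ι → ℝ) → ℝ} (hH : ContDiff ℝ 1 H) {z c : ι → ℝ} {d : ℝ}
    (h : HasDerivAt (fun t : ℝ => H (z + t • c)) d 0) : fderiv ℝ H z c = d := by
  have h1 : HasDerivAt (fun t : ℝ => z + t • c) c 0 := by
    simpa using ((hasDerivAt_id (0:ℝ)).smul_const c).const_add z
  have h2 : HasFDerivAt H (fderiv ℝ H z) (z + (0:ℝ) • c) := by
    simpa using ((hH.differentiable (by simp)) z).hasFDerivAt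
  exact (h2.comp_hasDerivAt 0 h1).unique h

lemma dot_line (a z c : ι → ℝ) : HasDerivAt (fun t : ℝ => a ⬝ᵥ (z + t • c)) (a ⬝ᵥ c) 0 := by
  simp only [dotProduct_add, dotProduct_smul, smul_eq_mul]
  simpa using ((hasDerivAt_id (0:ℝ)).mul_const (a ⬝ᵥ c)).const_add (a ⬝ᵥ z)

/-- directional derivative of `Zv`. -/
noncomputable def dZ (δ : ℝ) (a : W → I → ι → ℝ) (b : W → ι → ℝ) (z c : ι → ℝ) (w : W) : ℝ :=
  ∑ i, nn δ (Xv a w z) i * (a w i ⬝ᵥ c) + b w ⬝ᵥ c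

lemma Zv_line {δ : ℝ} (hδ : 0 < δ) (a : W → I → ι → ℝ) (b : W → ι → ℝ) (z c : ι → ℝ) (w : W) :
    HasDerivAt (fun t : ℝ => Zv δ a b (z + t • c) w) (dZ δ a b z c w) 0 := by
  have := (NN_deriv hδ (x := fun t => Xv a w (z + t • c)) (x' := fun i => a w i ⬝ᵥ c) (t := 0)
    (fun i => dot_line (a w i) z c)).add (dot_line (b w) z c)
  refine this.congr_deriv ?_
  simp [dZ]

lemma fd_wt {δ : ℝ} (hδ : 0 < δ) (β : ℝ) (a : W → I → ι → ℝ) (b : W → ι → ℝ) (z c : ι → ℝ) (w : W) :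
    fderiv ℝ (fun z => wt β (Zv δ a b z) w) z c = -β * wt β (Zv δ a b z) w *
      (dZ δ a b z c w - ∑ v, wt β (Zv δ a b z) v * dZ δ a b z c v) := by
  apply fd_line (wt_contDiff hδ β a b w)
  simpa using wt_deriv (β := β) (fun w => Zv_line hδ a b z c w) w

lemma fd_nn {δ : ℝ} (hδ : 0 < δ) (a : W → I → ι → ℝ) (z c : ι → ℝ) (w : W) (i : I) :
    fderiv ℝ (fun z => nn δ (Xv a w z) i) z c =
      ((a w i ⬝ᵥ c) - nn δ (Xv a w z) i * ∑ j, nn δ (Xv a w z) j * (a w j ⬝ᵥ c))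
        / NN δ (Xv a w z) := by
  apply fd_line (nn_contDiff hδ a w i)
  simpa using nn_deriv hδ (x := fun t => Xv a w (z + t • c)) (x' := fun i => a w i ⬝ᵥ c) (t := 0)
    (fun i => dot_line (a w i) z c) i

lemma dZ_bound {δ : ℝ} (hδ : 0 < δ) (a : W → I → ι → ℝ) (b : W → ι → ℝ) (z c : ι → ℝ) (w : W) :
    |dZ δ a b z c w| ≤ ∑ i, |a w i ⬝ᵥ c| + |b w ⬝ᵥ c| := by
  unfold dZ
  refine (abs_add_le _ _).trans (add_le_add ?_ le_rfl)
  refine (Finset.abs_sum_le_sum_abs _ _).trans (Finset.sum_le_sum fun i _ => ?_)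
  rw [abs_mul]
  exact mul_le_of_le_one_left (abs_nonneg _) (nn_abs hδ _ _)

lemma fd_wt_bound {δ : ℝ} (hδ : 0 < δ) (β : ℝ) (a : W → I → ι → ℝ) (b : W → ι → ℝ) (c : ι → ℝ)
    (w : W) : ∃ K, ∀ z, |fderiv ℝ (fun z => wt β (Zv δ a b z) w) z c| ≤ K := by
  refine ⟨|β| * ((∑ i, |a w i ⬝ᵥ c| + |b w ⬝ᵥ c|) +
    ∑ v, (∑ i, |a v i ⬝ᵥ c| + |b v ⬝ᵥ c|)), fun z => ?_⟩
  rw [fd_wt hδ, abs_mul, abs_mul, abs_neg]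
  have h1 : |wt β (Zv δ a b z) w| ≤ 1 := by
    rw [abs_of_nonneg (wt_nonneg _ _ _)]; exact wt_le_one _ _ _
  have h2 : |dZ δ a b z c w - ∑ v, wt β (Zv δ a b z) v * dZ δ a b z c v| ≤
      (∑ i, |a w i ⬝ᵥ c| + |b w ⬝ᵥ c|) + ∑ v, (∑ i, |a v i ⬝ᵥ c| + |b v ⬝ᵥ c|) := by
    refine (abs_sub _ _).trans (add_le_add (dZ_bound hδ a b z c w) ?_)
    refine (Finset.abs_sum_le_sum_abs _ _).trans (Finset.sum_le_sum fun v _ => ?_)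
    rw [abs_mul, abs_of_nonneg (wt_nonneg _ _ _)]
    exact (mul_le_of_le_one_left (abs_nonneg _) (wt_le_one _ _ _)).trans (dZ_bound hδ a b z c v)
  rw [mul_assoc]
  refine mul_le_mul_of_nonneg_left ?_ (abs_nonneg _)
  exact (mul_le_of_le_one_left (abs_nonneg _) h1).trans h2

lemma fd_nn_bound {δ : ℝ} (hδ : 0 < δ) (a : W → I → ι → ℝ) (c : ι → ℝ) (w : W) (i : I) :
    ∃ K, ∀ z, |fderiv ℝ (fun z => nn δ (Xv a w z) i) z c| ≤ K := by
  refine ⟨(|a w i ⬝ᵥ c| + ∑ j, |a w j ⬝ᵥ c|) / δ, fun z => ?_⟩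
  rw [fd_nn hδ, abs_div, abs_of_pos (NN_pos hδ _)]
  refine div_le_div₀ (by positivity) ?_ hδ (NN_ge hδ _)
  refine (abs_sub _ _).trans (add_le_add le_rfl ?_)
  rw [abs_mul]
  refine (mul_le_of_le_one_left (abs_nonneg _) (nn_abs hδ _ _)).trans ?_
  refine (Finset.abs_sum_le_sum_abs _ _).trans (Finset.sum_le_sum fun v _ => ?_)
  rw [abs_mul]
  exact mul_le_of_le_one_left (abs_nonneg _) (nn_abs hδ _ _)

lemma fd_mul {f g : (ι → ℝ) → ℝ} (hf : ContDiff ℝ 1 f) (hg : ContDiff ℝ 1 g) (z c : ι → ℝ) :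
    fderiv ℝ (fun z => f z * g z) z c = f z * fderiv ℝ g z c + g z * fderiv ℝ f z c := by
  rw [fderiv_fun_mul ((hf.differentiable (by simp)) z) ((hg.differentiable (by simp)) z)]
  simp
end soft


section gordon
variable {W I ι : Type} [Fintype W] [Nonempty W] [Fintype I] [DecidableEq I] [Fintype ι]
  [DecidableEq ι]

noncomputable def cpath {X : Type} (a0 a1 : X → ι → ℝ) (θ : ℝ) (x : X) : ι → ℝ :=
  Real.cos θ • a0 x + Real.sin θ • a1 x
noncomputable def dpath {X : Type} (a0 a1 : X → ι → ℝ) (θ : ℝ) (x : X) : ι → ℝ :=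
  -Real.sin θ • a0 x + Real.cos θ • a1 x

lemma cpath_deriv {X : Type} (a0 a1 : X → ι → ℝ) (θ : ℝ) (x : X) (z : ι → ℝ) :
    HasDerivAt (fun t => cpath a0 a1 t x ⬝ᵥ z) (dpath a0 a1 θ x ⬝ᵥ z) θ := by
  simp only [cpath, dpath, add_dotProduct, smul_dotProduct, smul_eq_mul]
  exact ((Real.hasDerivAt_cos θ).mul_const _).add ((Real.hasDerivAt_sin θ).mul_const _)

lemma dot_int (c : ι → ℝ) : Integrable (fun z : ι → ℝ => c ⬝ᵥ z) (PG ι) := by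
  unfold dotProduct
  exact integrable_finset_sum _ fun i _ => (pg_int_coord i).const_mul _

lemma dpath_bound {X : Type} (a0 a1 : X → ι → ℝ) (θ : ℝ) (x : X) (z : ι → ℝ) :
    |dpath a0 a1 θ x ⬝ᵥ z| ≤ |a0 x ⬝ᵥ z| + |a1 x ⬝ᵥ z| := by
  simp only [dpath, add_dotProduct, smul_dotProduct, smul_eq_mul]
  refine (abs_add_le _ _).trans (add_le_add ?_ ?_)
  · rw [abs_mul, abs_neg]
    exact mul_le_of_le_one_left (abs_nonneg _) (Real.abs_sin_le_one _)
  · rw [abs_mul]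
    exact mul_le_of_le_one_left (abs_nonneg _) (Real.abs_cos_le_one _)

lemma NN_le {δ : ℝ} (hδ : 0 < δ) (x : I → ℝ) : NN δ x ≤ ∑ i, |x i| + δ := by
  unfold NN
  have h0 : 0 ≤ ∑ i, |x i| := Finset.sum_nonneg fun i _ => abs_nonneg _
  rw [Real.sqrt_le_left (by positivity)]
  have : ∑ i, x i ^ 2 ≤ (∑ i, |x i|) ^ 2 := by
    simp_rw [← sq_abs (x _)]
    exact Finset.sum_sq_le_sq_sum_of_nonneg fun i _ => abs_nonneg _
  nlinarith

lemma Zv_int {δ : ℝ} (hδ : 0 < δ) (a : W → I → ι → ℝ) (b : W → ι → ℝ) (w : W) :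
    Integrable (fun z => Zv δ a b z w) (PG ι) := by
  refine Integrable.add ?_ (dot_int _)
  have : Integrable (fun z => ∑ i, |Xv a w z i| + δ) (PG ι) := by
    refine Integrable.add ?_ (integrable_const _)
    exact integrable_finset_sum _ fun i _ => (dot_int (a w i)).abs
  refine this.mono' (NN_contDiff hδ a w).continuous.aestronglyMeasurable (ae_of_all _ fun z => ?_)
  rw [Real.norm_of_nonneg (NN_pos hδ _).le]
  exact NN_le hδ _

lemma soft_int {δ : ℝ} (hδ : 0 < δ) {β : ℝ} (hβ : 0 < β) (a : W → I → ι → ℝ) (b : W → ι → ℝ) :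
    Integrable (fun z => soft β (Zv δ a b z)) (PG ι) := by
  have : Integrable (fun z => ∑ w, |Zv δ a b z w| + |Real.log (Fintype.card W) / β|) (PG ι) := by
    refine Integrable.add ?_ (integrable_const _)
    exact integrable_finset_sum _ fun w _ => (Zv_int hδ a b w).abs
  refine this.mono' (soft_contDiff hδ β a b).continuous.aestronglyMeasurable
    (ae_of_all _ fun z => ?_)
  have hb : ∀ w, |Zv δ a b z w| ≤ ∑ w, |Zv δ a b z w| := fun w =>
    Finset.single_le_sum (f := fun w => |Zv δ a b z w|) (fun v _ => abs_nonneg _)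
      (Finset.mem_univ w)
  rw [Real.norm_eq_abs, abs_le]
  constructor
  · have := le_soft hβ (Zv δ a b z) (-∑ w, |Zv δ a b z w|) (fun w => by
      have := hb w; rw [abs_le] at this; linarith [this.1, neg_abs_le (Zv δ a b z w), hb w])
    have := le_abs_self (Real.log (Fintype.card W) / β)
    linarith
  · obtain ⟨w⟩ := ‹Nonempty W›
    have := soft_le hβ (Zv δ a b z) w
    have := hb w
    have := le_abs_self (Zv δ a b z w)
    have := abs_nonneg (Real.log (Fintype.card W) / β)
    linarith

/-- the pathwise θ-derivative -/
noncomputable def dphi (δ β : ℝ) (a a' : W → I → ι → ℝ) (b b' : W → ι → ℝ) (z : ι → ℝ) : ℝ :=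
  ∑ w, wt β (Zv δ a b z) w * (∑ i, nn δ (Xv a w z) i * (a' w i ⬝ᵥ z) + b' w ⬝ᵥ z)

lemma dphi_integral_nonpos {δ β : ℝ} (hδ : 0 < δ) (hβ : 0 < β) (a a' : W → I → ι → ℝ)
    (b b' : W → ι → ℝ) (C : W → W → ℝ) (hC : ∀ w v, 0 ≤ C w v) (hCd : ∀ w, C w w = 0)
    (haa : ∀ w i v j, a' w i ⬝ᵥ a v j = if i = j then C w v else 0)
    (hbb : ∀ w v, b' w ⬝ᵥ b v = - C w v)
    (hab : ∀ w i v, a' w i ⬝ᵥ b v = 0) (hba : ∀ w v i, b' w ⬝ᵥ a v i = 0) :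
    ∫ z, dphi δ β a a' b b' z ∂(PG ι) ≤ 0 := by
  set p : W → (ι → ℝ) → ℝ := fun w z => wt β (Zv δ a b z) w with hp
  set q : W → I → (ι → ℝ) → ℝ := fun w i z => nn δ (Xv a w z) i with hq
  have hpc : ∀ w, ContDiff ℝ 1 (p w) := fun w => wt_contDiff hδ β a b w
  have hqc : ∀ w i, ContDiff ℝ 1 (q w i) := fun w i => nn_contDiff hδ a w i
  have hp1 : ∀ w z, |p w z| ≤ 1 := fun w z => by
    rw [abs_of_nonneg (wt_nonneg _ _ _)]; exact wt_le_one _ _ _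
  have hq1 : ∀ w i z, |q w i z| ≤ 1 := fun w i z => nn_abs hδ _ _
  have hpq1 : ∀ w i z, |p w z * q w i z| ≤ 1 := fun w i z => by
    rw [abs_mul]; exact mul_le_one₀ (hp1 w z) (abs_nonneg _) (hq1 w i z)
  have hfd : ∀ w i z c, fderiv ℝ (fun z => p w z * q w i z) z c
      = p w z * fderiv ℝ (q w i) z c + q w i z * fderiv ℝ (p w) z c := fun w i z c =>
    fd_mul (hpc w) (hqc w i) z c
  have hbd : ∀ w i c, ∃ K, ∀ z, |fderiv ℝ (fun z => p w z * q w i z) z c| ≤ K := by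
    intro w i c
    obtain ⟨K1, h1⟩ := fd_nn_bound hδ a c w i
    obtain ⟨K2, h2⟩ := fd_wt_bound hδ β a b c w
    refine ⟨K1 + K2, fun z => ?_⟩
    rw [hfd]
    refine (abs_add_le _ _).trans (add_le_add ?_ ?_)
    · rw [abs_mul]
      exact (mul_le_of_le_one_left (abs_nonneg _) (hp1 w z)).trans (h1 z)
    · rw [abs_mul]
      exact (mul_le_of_le_one_left (abs_nonneg _) (hq1 w i z)).trans (h2 z)
  -- integration by parts
  have I1 : ∀ w i, ∫ z, (a' w i ⬝ᵥ z) * (p w z * q w i z) ∂(PG ι) =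
      ∫ z, fderiv ℝ (fun z => p w z * q w i z) z (a' w i) ∂(PG ι) := fun w i =>
    ibp_dot _ _ ((hpc w).mul (hqc w i)) 1 (hpq1 w i) (hbd w i)
  have I2 : ∀ w, ∫ z, (b' w ⬝ᵥ z) * p w z ∂(PG ι) =
      ∫ z, fderiv ℝ (p w) z (b' w) ∂(PG ι) := fun w =>
    ibp_dot _ _ (hpc w) 1 (hp1 w) (fun c => fd_wt_bound hδ β a b c w)
  have dZa : ∀ z w i v, dZ δ a b z (a' w i) v = q v i z * C w v := by
    intro z w i v
    unfold dZ
    simp_rw [dotProduct_comm _ (a' w i), haa, hab]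
    simp [hq]
  have dZb : ∀ z w v, dZ δ a b z (b' w) v = - C w v := by
    intro z w v
    unfold dZ
    simp_rw [dotProduct_comm _ (b' w), hba, hbb]
    simp
  have F1 : ∀ w i z, fderiv ℝ (fun z => p w z * q w i z) z (a' w i) =
      β * ∑ v, p w z * p v z * C w v * (q w i z * q v i z) := by
    intro w i z
    rw [hfd]
    have e1 : fderiv ℝ (q w i) z (a' w i) = 0 := by
      rw [hq]
      simp only
      rw [fd_nn hδ]
      have : ∀ j, a w j ⬝ᵥ a' w i = 0 := fun j => by
        rw [dotProduct_comm, haa, hCd]; simp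
      simp [this]
    have e2 : fderiv ℝ (p w) z (a' w i) =
        β * p w z * ∑ v, p v z * (q v i z * C w v) := by
      rw [hp]
      simp only
      rw [fd_wt hδ]
      simp_rw [dZa, hCd]
      ring
    rw [e1, e2, mul_zero, zero_add, Finset.mul_sum, Finset.mul_sum, Finset.mul_sum]
    refine Finset.sum_congr rfl fun v _ => ?_
    ring
  have F2 : ∀ w z, fderiv ℝ (p w) z (b' w) = β * ∑ v, p w z * p v z * C w v * (-1) := by
    intro w z
    rw [hp]
    simp only
    rw [fd_wt hδ]
    simp_rw [dZb, hCd]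
    rw [neg_zero, zero_sub, Finset.mul_sum, ← Finset.sum_neg_distrib, Finset.mul_sum]
    refine Finset.sum_congr rfl fun v _ => ?_
    ring
  have hint1 : ∀ w i, Integrable (fun z => (a' w i ⬝ᵥ z) * (p w z * q w i z)) (PG ι) := by
    intro w i
    refine (dot_int (a' w i)).norm.mono' ?_ (ae_of_all _ fun z => ?_)
    · exact ((dot_contDiff _).mul ((hpc w).mul (hqc w i))).continuous.aestronglyMeasurable
    · rw [norm_mul]
      exact mul_le_of_le_one_right (norm_nonneg _) (hpq1 w i z)
  have hint2 : ∀ w, Integrable (fun z => (b' w ⬝ᵥ z) * p w z) (PG ι) := by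
    intro w
    refine (dot_int (b' w)).norm.mono' ?_ (ae_of_all _ fun z => ?_)
    · exact ((dot_contDiff _).mul (hpc w)).continuous.aestronglyMeasurable
    · rw [norm_mul]
      exact mul_le_of_le_one_right (norm_nonneg _) (hp1 w z)
  have hint3 : ∀ w i, Integrable
      (fun z => fderiv ℝ (fun z => p w z * q w i z) z (a' w i)) (PG ι) := by
    intro w i
    obtain ⟨K, hK⟩ := hbd w i (a' w i)
    refine (integrable_const K).mono' ?_ (ae_of_all _ hK)
    exact ((((hpc w).mul (hqc w i)).continuous_fderiv (by simp)).clm_apply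
      continuous_const).aestronglyMeasurable
  have hint4 : ∀ w, Integrable (fun z => fderiv ℝ (p w) z (b' w)) (PG ι) := by
    intro w
    obtain ⟨K, hK⟩ := fd_wt_bound hδ β a b (b' w) w
    refine (integrable_const K).mono' ?_ (ae_of_all _ hK)
    exact (((hpc w).continuous_fderiv (by simp)).clm_apply
      continuous_const).aestronglyMeasurable
  have E1 : ∀ z, dphi δ β a a' b b' z =
      ∑ w, (∑ i, (a' w i ⬝ᵥ z) * (p w z * q w i z) + (b' w ⬝ᵥ z) * p w z) := by
    intro z
    unfold dphi
    refine Finset.sum_congr rfl fun w _ => ?_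
    rw [mul_add, Finset.mul_sum]
    congr 1
    · exact Finset.sum_congr rfl fun i _ => by simp only [hp, hq]; ring
    · simp only [hp]; ring
  simp_rw [E1]
  have E2 : ∫ z, ∑ w, (∑ i, (a' w i ⬝ᵥ z) * (p w z * q w i z) + (b' w ⬝ᵥ z) * p w z) ∂(PG ι)
      = ∫ z, ∑ w, (∑ i, fderiv ℝ (fun z => p w z * q w i z) z (a' w i)
          + fderiv ℝ (p w) z (b' w)) ∂(PG ι) := by
    rw [integral_finsetSum, integral_finsetSum]
    · refine Finset.sum_congr rfl fun w _ => ?_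
      rw [integral_add (integrable_finset_sum _ fun i _ => hint1 w i) (hint2 w),
        integral_add (integrable_finset_sum _ fun i _ => hint3 w i) (hint4 w),
        integral_finsetSum _ (fun i _ => hint1 w i),
        integral_finsetSum _ (fun i _ => hint3 w i), I2]
      simp_rw [I1]
    · intro w _
      exact (integrable_finset_sum _ fun i _ => hint3 w i).add (hint4 w)
    · intro w _
      exact (integrable_finset_sum _ fun i _ => hint1 w i).add (hint2 w)
  rw [E2]
  refine integral_nonpos fun z => ?_
  simp only [Pi.zero_apply]
  refine Finset.sum_nonpos fun w _ => ?_
  simp_rw [F1, F2]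
  rw [← Finset.mul_sum, ← mul_add]
  refine mul_nonpos_of_nonneg_of_nonpos hβ.le ?_
  rw [Finset.sum_comm, ← Finset.sum_add_distrib]
  refine Finset.sum_nonpos fun v _ => ?_
  rw [← Finset.mul_sum, ← mul_add]
  refine mul_nonpos_of_nonneg_of_nonpos ?_ ?_
  · exact mul_nonneg (mul_nonneg (wt_nonneg _ _ _) (wt_nonneg _ _ _)) (hC w v)
  · have := nn_inner hδ (Xv a w z) (Xv a v z)
    simp only [hq]
    linarith

theorem gordon_soft {δ β : ℝ} (hδ : 0 < δ) (hβ : 0 < β) (a0 a1 : W → I → ι → ℝ)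
    (b0 b1 : W → ι → ℝ) (G R : W → W → ℝ) (hGR : ∀ w v, G w v ≤ R w v)
    (hd : ∀ w, G w w = R w w)
    (h00 : ∀ w i v j, a0 w i ⬝ᵥ a0 v j = if i = j then G w v else 0)
    (h11 : ∀ w i v j, a1 w i ⬝ᵥ a1 v j = if i = j then R w v else 0)
    (h01 : ∀ w i v j, a0 w i ⬝ᵥ a1 v j = 0)
    (k00 : ∀ w v, b0 w ⬝ᵥ b0 v = R w v) (k11 : ∀ w v, b1 w ⬝ᵥ b1 v = G w v)
    (k01 : ∀ w v, b0 w ⬝ᵥ b1 v = 0)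
    (l00 : ∀ w i v, a0 w i ⬝ᵥ b0 v = 0) (l01 : ∀ w i v, a0 w i ⬝ᵥ b1 v = 0)
    (l10 : ∀ w i v, a1 w i ⬝ᵥ b0 v = 0) (l11 : ∀ w i v, a1 w i ⬝ᵥ b1 v = 0) :
    ∫ z, soft β (Zv δ a1 b1 z) ∂(PG ι) ≤ ∫ z, soft β (Zv δ a0 b0 z) ∂(PG ι) := by
  set A : ℝ → W → I → ι → ℝ := fun θ w i => cpath (a0 w) (a1 w) θ i with hA
  set A' : ℝ → W → I → ι → ℝ := fun θ w i => dpath (a0 w) (a1 w) θ i with hA'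
  set B : ℝ → W → ι → ℝ := fun θ w => cpath b0 b1 θ w with hB
  set B' : ℝ → W → ι → ℝ := fun θ w => dpath b0 b1 θ w with hB'
  set φ : ℝ → ℝ := fun θ => ∫ z, soft β (Zv δ (A θ) (B θ) z) ∂(PG ι) with hφ
  have hder : ∀ θ, HasDerivAt φ (∫ z, dphi δ β (A θ) (A' θ) (B θ) (B' θ) z ∂(PG ι)) θ := by
    intro θ
    have hpt : ∀ z θ, HasDerivAt (fun θ => soft β (Zv δ (A θ) (B θ) z))
        (dphi δ β (A θ) (A' θ) (B θ) (B' θ) z) θ := by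
      intro z θ
      refine soft_deriv hβ (ζ := fun θ => Zv δ (A θ) (B θ) z)
        (ζ' := fun w => ∑ i, nn δ (Xv (A θ) w z) i * (A' θ w i ⬝ᵥ z) + B' θ w ⬝ᵥ z) fun w => ?_
      exact (NN_deriv hδ (x := fun θ => Xv (A θ) w z) (x' := fun i => A' θ w i ⬝ᵥ z)
        (fun i => cpath_deriv _ _ _ _ _)).add (cpath_deriv _ _ _ _ _)
    refine (hasDerivAt_integral_of_dominated_loc_of_deriv_le
      (F' := fun θ z => dphi δ β (A θ) (A' θ) (B θ) (B' θ) z)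
      (bound := fun z => ∑ w, (∑ i, (|a0 w i ⬝ᵥ z| + |a1 w i ⬝ᵥ z|) +
        (|b0 w ⬝ᵥ z| + |b1 w ⬝ᵥ z|)))
      (Filter.univ_mem) ?_ (soft_int hδ hβ _ _) ?_ ?_ ?_ ?_).2
    · exact Filter.Eventually.of_forall fun θ =>
        (soft_contDiff hδ β _ _).continuous.aestronglyMeasurable
    · apply Continuous.aestronglyMeasurable
      unfold dphi
      have c1 := fun w => (wt_contDiff hδ β (A θ) (B θ) w).continuous
      have c2 := fun w i => (nn_contDiff hδ (A θ) w i).continuous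
      have c3 := fun c : ι → ℝ => (dot_contDiff c).continuous
      refine continuous_finset_sum _ fun w _ => (c1 w).mul (Continuous.add ?_ (c3 _))
      exact continuous_finset_sum _ fun i _ => (c2 w i).mul (c3 _)
    · refine ae_of_all _ fun z θ _ => ?_
      unfold dphi
      rw [Real.norm_eq_abs]
      refine (Finset.abs_sum_le_sum_abs _ _).trans (Finset.sum_le_sum fun w _ => ?_)
      rw [abs_mul, abs_of_nonneg (wt_nonneg _ _ _)]
      refine (mul_le_of_le_one_left (abs_nonneg _) (wt_le_one _ _ _)).trans ?_
      refine (abs_add_le _ _).trans (add_le_add ?_ (dpath_bound _ _ _ _ _))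
      refine (Finset.abs_sum_le_sum_abs _ _).trans (Finset.sum_le_sum fun i _ => ?_)
      rw [abs_mul]
      exact (mul_le_of_le_one_left (abs_nonneg _) (nn_abs hδ _ _)).trans (dpath_bound _ _ _ _ _)
    · refine integrable_finset_sum _ fun w _ => Integrable.add ?_ ?_
      · exact integrable_finset_sum _ fun i _ => (dot_int _).abs.add (dot_int _).abs
      · exact (dot_int _).abs.add (dot_int _).abs
    · exact ae_of_all _ fun z θ _ => hpt z θ
  have hanti : AntitoneOn φ (Set.Icc 0 (Real.pi / 2)) := by
    refine antitoneOn_of_deriv_nonpos (convex_Icc _ _)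
      (fun θ _ => (hder θ).continuousAt.continuousWithinAt)
      (fun θ _ => (hder θ).differentiableAt.differentiableWithinAt) fun θ hθ => ?_
    rw [interior_Icc] at hθ
    rw [(hder θ).deriv]
    have hs : 0 ≤ Real.sin θ := Real.sin_nonneg_of_nonneg_of_le_pi hθ.1.le
      (by linarith [hθ.2, Real.pi_pos])
    have hc : 0 ≤ Real.cos θ := Real.cos_nonneg_of_neg_pi_div_two_le_of_le
      (by linarith [hθ.1, Real.pi_pos]) hθ.2.le
    have h10 : ∀ w i v j, a1 w i ⬝ᵥ a0 v j = 0 := fun w i v j => by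
      rw [dotProduct_comm, h01]
    have k10 : ∀ w v, b1 w ⬝ᵥ b0 v = 0 := fun w v => by rw [dotProduct_comm, k01]
    refine dphi_integral_nonpos hδ hβ _ _ _ _
      (fun w v => Real.sin θ * Real.cos θ * (R w v - G w v)) ?_ ?_ ?_ ?_ ?_ ?_
    · intro w v
      exact mul_nonneg (mul_nonneg hs hc) (sub_nonneg.2 (hGR w v))
    · intro w; simp [hd w]
    · intro w i v j
      simp only [hA, hA', cpath, dpath, add_dotProduct, smul_dotProduct, dotProduct_add,
        dotProduct_smul, smul_eq_mul, h00, h11, h01, h10]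
      split_ifs <;> ring
    · intro w v
      simp only [hB, hB', cpath, dpath, add_dotProduct, smul_dotProduct, dotProduct_add,
        dotProduct_smul, smul_eq_mul, k00, k11, k01, k10]
      ring
    · intro w i v
      simp only [hB, hA', cpath, dpath, add_dotProduct, smul_dotProduct, dotProduct_add,
        dotProduct_smul, smul_eq_mul, l00, l01, l10, l11]
      ring
    · intro w v i
      rw [dotProduct_comm]
      simp only [hA, hB', cpath, dpath, add_dotProduct, smul_dotProduct, dotProduct_add,
        dotProduct_smul, smul_eq_mul, l00, l01, l10, l11]
      ring
  have h := hanti (a := 0) (b := Real.pi / 2) ⟨le_rfl, by positivity⟩ ⟨by positivity, le_rfl⟩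
    (by positivity)
  simpa [hφ, hA, hB, cpath] using h
end gordon


lemma tprod_ac {δ : Type} (l : List δ) (μ ν : δ → Measure ℝ) [∀ i, SigmaFinite (μ i)]
    [∀ i, SigmaFinite (ν i)] (h : ∀ i, μ i ≪ ν i) :
    Measure.tprod l μ ≪ Measure.tprod l ν := by
  induction l with
  | nil => exact Measure.AbsolutelyContinuous.rfl
  | cons i l ih => 
    rw [Measure.tprod_cons, Measure.tprod_cons]
    exact (h i).prod ih

lemma pi_ac {ι : Type} [Fintype ι] (μ ν : ι → Measure ℝ) [∀ i, SigmaFinite (μ i)]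
    [∀ i, SigmaFinite (ν i)] (h : ∀ i, μ i ≪ ν i) : Measure.pi μ ≪ Measure.pi ν := by
  haveI := Fintype.toEncodable ι
  rw [← Measure.pi'_eq_pi, ← Measure.pi'_eq_pi]
  unfold Measure.pi'
  exact (tprod_ac _ μ ν h).map (by classical exact measurable_tProd_elim' _)

lemma PG_ac {ι : Type} [Fintype ι] : PG ι ≪ volume := by
  rw [volume_pi]
  exact pi_ac _ _ fun i => gaussianReal_absolutelyContinuous 0 (by simp)

lemma PG_orth {κ : Type} [Fintype κ] (T : (κ → ℝ) →ₗ[ℝ] (κ → ℝ))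
    (h : ∀ z, ∑ i, T z i ^ 2 = ∑ i, z i ^ 2) : MeasurePreserving T (PG κ) (PG κ) := by
  have hTm : Measurable T := (LinearMap.continuous_of_finiteDimensional T).measurable
  let e := WithLp.linearEquiv 2 ℝ (κ → ℝ)
  let T2 : EuclideanSpace ℝ κ →ₗ[ℝ] EuclideanSpace ℝ κ := e.symm.toLinearMap ∘ₗ T ∘ₗ e.toLinearMap
  have hT2 : ∀ x, ‖T2 x‖ = ‖x‖ := by
    intro x
    rw [EuclideanSpace.norm_eq, EuclideanSpace.norm_eq]
    congr 1
    simp only [Real.norm_eq_abs, sq_abs]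
    exact h (e x)
  let T3 : EuclideanSpace ℝ κ →ₗᵢ[ℝ] EuclideanSpace ℝ κ := ⟨T2, hT2⟩
  let T4 := T3.toLinearIsometryEquiv rfl
  have key := stdGaussian_map T4
  rw [← map_pi_eq_stdGaussian] at key
  have hm1 : Measurable (WithLp.toLp 2 : (κ → ℝ) → EuclideanSpace ℝ κ) := by fun_prop
  have hm2 : Measurable (WithLp.ofLp : EuclideanSpace ℝ κ → (κ → ℝ)) := by fun_prop
  refine ⟨hTm, ?_⟩
  have := congrArg (Measure.map (WithLp.ofLp : EuclideanSpace ℝ κ → (κ → ℝ))) key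
  rw [Measure.map_map T4.continuous.measurable hm1, Measure.map_map hm2 
    (T4.continuous.measurable.comp hm1), Measure.map_map hm2 hm1] at this
  have e2 : (WithLp.ofLp ∘ WithLp.toLp 2 : (κ → ℝ) → (κ → ℝ)) = id := rfl
  rw [e2, Measure.map_id] at this
  exact this

lemma PG_rot {ι : Type} [Fintype ι] (θ : ℝ) :
    MeasurePreserving (fun p : (ι → ℝ) × (ι → ℝ) =>
      (Real.cos θ • p.1 + Real.sin θ • p.2, -Real.sin θ • p.1 + Real.cos θ • p.2))
      ((PG ι).prod (PG ι)) ((PG ι).prod (PG ι)) := by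
  let T : (ι ⊕ ι → ℝ) →ₗ[ℝ] (ι ⊕ ι → ℝ) :=
    { toFun := fun z => Sum.elim (fun i => Real.cos θ * z (.inl i) + Real.sin θ * z (.inr i))
        (fun i => -Real.sin θ * z (.inl i) + Real.cos θ * z (.inr i))
      map_add' := by
        intro x y; ext i; rcases i with i | i <;> simp <;> ring
      map_smul' := by
        intro x y; ext i; rcases i with i | i <;> simp <;> ring }
  have hT := PG_orth T (by
    intro z
    simp only [Fintype.sum_sum_type, ← Finset.sum_add_distrib]
    refine Finset.sum_congr rfl fun i _ => ?_
    simp only [T, LinearMap.coe_mk, AddHom.coe_mk, Sum.elim_inl, Sum.elim_inr]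
    linear_combination (z (.inl i) ^ 2 + z (.inr i) ^ 2) * Real.sin_sq_add_cos_sq θ)
  have m1 := measurePreserving_sumPiEquivProdPi (fun _ : ι ⊕ ι => gaussianReal 0 1)
  exact (m1.comp (hT.comp m1.symm))

lemma gauss_exp_abs_int (c : ℝ) : Integrable (fun x : ℝ => Real.exp (c * |x|)) (gaussianReal 0 1) := by
  have := (integrable_exp_mul_gaussianReal (μ := 0) (v := 1) c).add
    (integrable_exp_mul_gaussianReal (μ := 0) (v := 1) (-c))
  refine this.mono' (by fun_prop) (ae_of_all _ fun x => ?_)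
  rw [Real.norm_of_nonneg (Real.exp_pos _).le]
  simp only [Pi.add_apply]
  rcases abs_cases x with h | h
  · rw [h.1]; have := Real.exp_pos (-c * x); linarith
  · rw [h.1, show c * -x = -c * x by ring]; have := Real.exp_pos (c * x); linarith

lemma PG_exp_int {ι : Type} [Fintype ι] (c : ℝ) :
    Integrable (fun z : ι → ℝ => Real.exp (c * ∑ i, |z i|)) (PG ι) := by
  have := Integrable.fintype_prod (μ := fun _ : ι => gaussianReal 0 1) 
    (f := fun _ x => Real.exp (c * |x|)) (fun _ => gauss_exp_abs_int c)
  refine this.congr (ae_of_all _ fun z => ?_)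
  simp only
  rw [← Real.exp_sum, Finset.mul_sum]

lemma PG_mgf {ι : Type} [Fintype ι] (a : ι → ℝ) :
    ∫ z, Real.exp (∑ i, a i * z i) ∂(PG ι) = Real.exp ((∑ i, a i ^ 2) / 2) := by
  simp_rw [Real.exp_sum]
  rw [integral_fintype_prod_eq_prod (fun i x => Real.exp (a i * x)), Finset.sum_div, Real.exp_sum]
  refine Finset.prod_congr rfl fun i _ => ?_
  have := mgf_gaussianReal (p := gaussianReal 0 1) (X := id) (μ := 0) (v := 1) (by simp) (a i)
  simpa [mgf] using this


def LipE {ι : Type} [Fintype ι] (M : ℝ) (F : (ι → ℝ) → ℝ) : Prop :=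
  ∀ x y, |F x - F y| ≤ M * √(∑ i, (x i - y i) ^ 2)

lemma sqrt_sum_le {ι : Type} [Fintype ι] (x : ι → ℝ) : √(∑ i, x i ^ 2) ≤ ∑ i, |x i| := by
  have h0 : 0 ≤ ∑ i, |x i| := Finset.sum_nonneg fun i _ => abs_nonneg _
  rw [Real.sqrt_le_left h0]
  have := Finset.sum_sq_le_sq_sum_of_nonneg (s := Finset.univ) (f := fun i => |x i|)
    (fun i _ => abs_nonneg _)
  simpa [sq_abs] using this

section
variable {ι : Type} [Fintype ι] {M : ℝ} {F : (ι → ℝ) → ℝ}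

lemma LipE.l1 (hM : 0 ≤ M) (hF : LipE M F) (x y : ι → ℝ) : |F x - F y| ≤ M * ∑ i, |x i - y i| :=
  (hF x y).trans (mul_le_mul_of_nonneg_left (sqrt_sum_le fun i => x i - y i) hM)

lemma LipE.lip (hM : 0 ≤ M) (hF : LipE M F) :
    LipschitzWith (Real.toNNReal (M * Fintype.card ι)) F := by
  refine LipschitzWith.of_dist_le_mul fun x y => ?_
  rw [Real.coe_toNNReal _ (by positivity), Real.dist_eq]
  refine (hF.l1 hM x y).trans ?_
  rw [mul_assoc]
  refine mul_le_mul_of_nonneg_left ?_ hM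
  calc ∑ i, |x i - y i| ≤ ∑ i : ι, dist x y := Finset.sum_le_sum fun i _ => by
        rw [← Real.dist_eq]; exact dist_le_pi_dist x y i
    _ = _ := by simp

lemma LipE.fderiv_le (hM : 0 ≤ M) (hF : LipE M F) (x : ι → ℝ) (L : (ι → ℝ) →L[ℝ] ℝ)
    (hL : HasFDerivAt F L x) (u : ι → ℝ) : |L u| ≤ M * √(∑ i, u i ^ 2) := by
  have hc : HasDerivAt (fun t : ℝ => x + t • u) u 0 := by
    simpa using ((hasDerivAt_id (0:ℝ)).smul_const u).const_add x
  have h2 : HasDerivAt (fun t : ℝ => F (x + t • u)) (L u) 0 := by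
    refine HasFDerivAt.comp_hasDerivAt (0:ℝ) ?_ hc
    simpa using hL
  have := h2.le_of_lip' (C := M * √(∑ i, u i ^ 2)) (by positivity) (Filter.Eventually.of_forall fun t => ?_)
  · simpa using this
  · have := hF (x + t • u) (x + (0:ℝ) • u)
    refine this.trans (le_of_eq ?_)
    simp only [Pi.add_apply, Pi.smul_apply, smul_eq_mul, zero_mul, add_zero, add_sub_cancel_left,
      mul_pow, ← Finset.mul_sum, sub_zero, Real.norm_eq_abs]
    rw [Real.sqrt_mul (sq_nonneg _), Real.sqrt_sq_eq_abs]; ring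

lemma LipE.fderiv_sq (hM : 0 ≤ M) (hF : LipE M F) (x : ι → ℝ) (L : (ι → ℝ) →L[ℝ] ℝ)
    (hL : HasFDerivAt F L x) : ∃ a : ι → ℝ, (∀ u, L u = ∑ i, a i * u i) ∧ ∑ i, a i ^ 2 ≤ M ^ 2 := by
  classical
  have hu : ∀ u, L u = ∑ i, L (Pi.single i 1) * u i := by
    intro u
    have := LinearMap.pi_apply_eq_sum_univ L.toLinearMap u
    simp only [ContinuousLinearMap.coe_coe, smul_eq_mul] at this
    rw [this]
    refine Finset.sum_congr rfl fun i _ => ?_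
    rw [mul_comm]; congr 2; ext j; simp [Pi.single_apply, eq_comm]
  refine ⟨fun i => L (Pi.single i 1), hu, ?_⟩
  set a : ι → ℝ := fun i => L (Pi.single i 1)
  have h := hF.fderiv_le hM x L hL a
  rw [hu a] at h
  have h0 : 0 ≤ ∑ i, a i ^ 2 := Finset.sum_nonneg fun i _ => sq_nonneg _
  have e : ∑ i, L (Pi.single i 1) * a i = √(∑ i, a i ^ 2) ^ 2 := by
    rw [Real.sq_sqrt h0]; exact Finset.sum_congr rfl fun i _ => by simp only [a]; ring
  rw [e, abs_of_nonneg (sq_nonneg _)] at h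
  have h1 : √(∑ i, a i ^ 2) ≤ M := by
    by_contra hc
    push Not at hc
    nlinarith
  rw [← Real.sq_sqrt h0]
  exact pow_le_pow_left₀ (Real.sqrt_nonneg _) h1 2

/-- rotated increment -/
noncomputable def rotd (F : (ι → ℝ) → ℝ) (t : ℝ) (p : (ι → ℝ) × (ι → ℝ)) : ℝ :=
  F (Real.cos t • p.1 + Real.sin t • p.2) - F p.1

lemma rotd_cont (hM : 0 ≤ M) (hF : LipE M F) (t : ℝ) : Continuous (rotd F t) := by
  have := (hF.lip hM).continuous
  unfold rotd
  fun_prop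

lemma rotd_bound (hM : 0 ≤ M) (hF : LipE M F) (t : ℝ) (ht : 0 ≤ t) (p : (ι → ℝ) × (ι → ℝ)) :
    |rotd F t p| ≤ M * t * (∑ i, |p.1 i| + ∑ i, |p.2 i|) := by
  refine (hF.l1 hM _ _).trans ?_
  rw [mul_assoc]
  refine mul_le_mul_of_nonneg_left ?_ hM
  rw [← Finset.sum_add_distrib, Finset.mul_sum]
  refine Finset.sum_le_sum fun i _ => ?_
  simp only [Pi.add_apply, Pi.smul_apply, smul_eq_mul]
  have h1 : |Real.cos t - 1| ≤ t := by
    have := Real.abs_cos_sub_cos_le t 0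
    simpa [abs_of_nonneg ht] using this
  have h2 : |Real.sin t| ≤ t := by
    have := Real.abs_sin_le_abs (x := t)
    simpa [abs_of_nonneg ht] using this
  calc |Real.cos t * p.1 i + Real.sin t * p.2 i - p.1 i|
      = |(Real.cos t - 1) * p.1 i + Real.sin t * p.2 i| := by ring_nf
    _ ≤ |(Real.cos t - 1) * p.1 i| + |Real.sin t * p.2 i| := abs_add_le _ _
    _ ≤ t * |p.1 i| + t * |p.2 i| := by
        rw [abs_mul, abs_mul]; gcongr
    _ = _ := by ring

lemma exp_bound_int (c : ℝ) : Integrable (fun p : (ι → ℝ) × (ι → ℝ) =>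
    Real.exp (c * (∑ i, |p.1 i| + ∑ i, |p.2 i|))) ((PG ι).prod (PG ι)) := by
  have := (PG_exp_int (ι := ι) c).mul_prod (PG_exp_int (ι := ι) c)
  refine this.congr (ae_of_all _ fun p => ?_)
  simp only
  rw [← Real.exp_add]; ring_nf

lemma rotd_exp_int (hM : 0 ≤ M) (hF : LipE M F) (t : ℝ) (ht : 0 ≤ t) (c : ℝ) :
    Integrable (fun p => Real.exp (c * rotd F t p)) ((PG ι).prod (PG ι)) := by
  refine (exp_bound_int (|c| * (M * t))).mono' ?_ (ae_of_all _ fun p => ?_)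
  · have := rotd_cont hM hF t
    exact Continuous.aestronglyMeasurable (by fun_prop)
  · rw [Real.norm_of_nonneg (Real.exp_pos _).le, Real.exp_le_exp]
    refine (le_abs_self _).trans ?_
    rw [abs_mul, mul_assoc]
    exact mul_le_mul_of_nonneg_left (rotd_bound hM hF t ht p) (abs_nonneg _)

lemma tele (hM : 0 ≤ M) (hF : LipE M F) (l : ℝ) (N : ℕ) :
    ∫ p, Real.exp (l * (F p.2 - F p.1)) ∂((PG ι).prod (PG ι)) ≤
    ∫ p, Real.exp (((N : ℝ) + 1) * l * rotd F (Real.pi / 2 / (N + 1)) p) ∂((PG ι).prod (PG ι)) := by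
  set d := Real.pi / 2 / ((N : ℝ) + 1) with hd
  have hN : (0 : ℝ) < (N : ℝ) + 1 := by positivity
  have hd0 : 0 ≤ d := by positivity
  let R : ℝ → (ι → ℝ) × (ι → ℝ) → (ι → ℝ) × (ι → ℝ) := fun θ p =>
      (Real.cos θ • p.1 + Real.sin θ • p.2, -Real.sin θ • p.1 + Real.cos θ • p.2)
  have hR : ∀ θ, MeasurePreserving (R θ) ((PG ι).prod (PG ι)) ((PG ι).prod (PG ι)) := fun θ => PG_rot θ
  have hi := rotd_exp_int hM hF d hd0 (((N : ℝ) + 1) * l)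
  have hik : ∀ k : ℕ, Integrable (fun p => Real.exp (((N : ℝ) + 1) * l * rotd F d (R (k * d) p)))
      ((PG ι).prod (PG ι)) := fun k => (hR (k * d)).integrable_comp_of_integrable hi
  have hek : ∀ k : ℕ, ∫ p, Real.exp (((N : ℝ) + 1) * l * rotd F d (R (k * d) p)) ∂((PG ι).prod (PG ι))
      = ∫ p, Real.exp (((N : ℝ) + 1) * l * rotd F d p) ∂((PG ι).prod (PG ι)) := by
    intro k
    have hmap := (hR (k * d)).map_eq
    conv_rhs => rw [← hmap]
    rw [integral_map (hR _).measurable.aemeasurable]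
    rw [hmap]; exact hi.aestronglyMeasurable
  have htel : ∀ p : (ι → ℝ) × (ι → ℝ), F p.2 - F p.1 = ∑ k ∈ Finset.range (N + 1), rotd F d (R (k * d) p) := by
    intro p
    have : ∀ k : ℕ, rotd F d (R (k * d) p) =
       F (Real.cos ((k + 1 : ℕ) * d) • p.1 + Real.sin ((k + 1 : ℕ) * d) • p.2)
       - F (Real.cos (k * d) • p.1 + Real.sin (k * d) • p.2) := by
      intro k
      simp only [rotd, R]
      congr 2
      rw [show (((k + 1 : ℕ) : ℝ)) * d = k * d + d by push_cast; ring, Real.cos_add, Real.sin_add]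
      ext i
      simp only [Pi.add_apply, Pi.smul_apply, smul_eq_mul]
      ring
    simp_rw [this]
    rw [Finset.sum_range_sub (fun k : ℕ => F (Real.cos (k * d) • p.1 + Real.sin (k * d) • p.2))]
    have : ((N + 1 : ℕ) : ℝ) * d = Real.pi / 2 := by rw [hd]; push_cast; field_simp
    rw [this]; simp
  have hpt : ∀ p : (ι → ℝ) × (ι → ℝ), Real.exp (l * (F p.2 - F p.1)) ≤
      ∑ k ∈ Finset.range (N + 1), (1 / ((N : ℝ) + 1)) * Real.exp (((N : ℝ) + 1) * l * rotd F d (R (k * d) p)) := by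
    intro p
    have := convexOn_exp.map_sum_le (t := Finset.range (N + 1)) (w := fun _ => 1 / ((N : ℝ) + 1))
      (p := fun k => ((N : ℝ) + 1) * l * rotd F d (R (k * d) p)) (fun _ _ => by positivity)
      (by simp; field_simp) (fun _ _ => trivial)
    simp only [smul_eq_mul] at this
    refine le_trans (le_of_eq ?_) this
    rw [htel, Finset.mul_sum]
    congr 1
    refine Finset.sum_congr rfl fun k _ => ?_
    field_simp
  calc _ ≤ ∫ p, ∑ k ∈ Finset.range (N + 1), (1 / ((N : ℝ) + 1)) * Real.exp (((N : ℝ) + 1) * l * rotd F d (R (k * d) p)) ∂((PG ι).prod (PG ι)) := by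
        refine integral_mono_of_nonneg (ae_of_all _ fun p => (Real.exp_pos _).le) ?_ (ae_of_all _ hpt)
        exact integrable_finsetSum _ fun k _ => (hik k).const_mul _
    _ = _ := by
        rw [integral_finsetSum _ fun k _ => (hik k).const_mul _]
        simp_rw [integral_const_mul, hek]
        simp; field_simp

lemma mp_bound (hM : 0 ≤ M) (hF : LipE M F) (l : ℝ) :
    ∫ p, Real.exp (l * (F p.2 - F p.1)) ∂((PG ι).prod (PG ι)) ≤ Real.exp (2 * l ^ 2 * M ^ 2) := by
  set f : ℕ → (ι → ℝ) × (ι → ℝ) → ℝ := fun N p =>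
    Real.exp (((N : ℝ) + 1) * l * rotd F (Real.pi / 2 / (N + 1)) p) with hf
  set g : (ι → ℝ) × (ι → ℝ) → ℝ := fun p => Real.exp (l * (Real.pi / 2) * fderiv ℝ F p.1 p.2) with hg
  have hdiff : ∀ᵐ x ∂(PG ι), DifferentiableAt ℝ F x :=
    PG_ac.ae_le ((hF.lip hM).ae_differentiableAt (μ := volume))
  have hdiff2 : ∀ᵐ p ∂((PG ι).prod (PG ι)), DifferentiableAt ℝ F p.1 :=
    Measure.quasiMeasurePreserving_fst.ae hdiff
  have hlim : ∀ᵐ p ∂((PG ι).prod (PG ι)), Filter.Tendsto (fun N => f N p) Filter.atTop (nhds (g p)) := by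
    filter_upwards [hdiff2] with p hp
    have hc : HasDerivAt (fun t : ℝ => Real.cos t • p.1 + Real.sin t • p.2) p.2 0 := by
      have := ((Real.hasDerivAt_cos 0).smul_const p.1).fun_add ((Real.hasDerivAt_sin 0).smul_const p.2)
      simpa using this
    have h2 : HasDerivAt (fun t : ℝ => F (Real.cos t • p.1 + Real.sin t • p.2)) (fderiv ℝ F p.1 p.2) 0 := by
      refine HasFDerivAt.comp_hasDerivAt (0:ℝ) ?_ hc
      simpa using hp.hasFDerivAt
    have h3 := h2.tendsto_slope_zero
    have ht : Filter.Tendsto (fun N : ℕ => Real.pi / 2 / ((N : ℝ) + 1)) Filter.atTop (nhdsWithin 0 {0}ᶜ) := by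
      refine tendsto_nhdsWithin_iff.2 ⟨?_, Filter.Eventually.of_forall fun N => ?_⟩
      · have := (tendsto_one_div_add_atTop_nhds_zero_nat (𝕜 := ℝ)).const_mul (Real.pi / 2)
        simpa [div_eq_mul_inv] using this
      · have : 0 < Real.pi / 2 / ((N : ℝ) + 1) := by positivity
        exact this.ne'
    have h4 := (h3.comp ht).const_mul (l * (Real.pi / 2))
    refine (Real.continuous_exp.tendsto _).comp (h4.congr fun N => ?_)
    simp only [Function.comp, zero_add, Real.cos_zero, Real.sin_zero, one_smul, zero_smul, add_zero,
      smul_eq_mul, rotd]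
    field_simp
  have hbd : ∀ N p, f N p ≤ Real.exp (|l| * M * 2 * (∑ i, |p.1 i| + ∑ i, |p.2 i|)) := by
    intro N p
    rw [hf]; simp only
    rw [Real.exp_le_exp]
    refine (le_abs_self _).trans ?_
    have hN : (0 : ℝ) < (N : ℝ) + 1 := by positivity
    rw [abs_mul, abs_mul, abs_of_pos hN]
    have := rotd_bound hM hF (Real.pi / 2 / (N + 1)) (by positivity) p
    have hs : 0 ≤ ∑ i, |p.1 i| + ∑ i, |p.2 i| :=
      add_nonneg (Finset.sum_nonneg fun i _ => abs_nonneg _) (Finset.sum_nonneg fun i _ => abs_nonneg _)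
    calc _ ≤ ((N : ℝ) + 1) * |l| * (M * (Real.pi / 2 / (N + 1)) * (∑ i, |p.1 i| + ∑ i, |p.2 i|)) := by gcongr
      _ = |l| * M * (Real.pi / 2) * (∑ i, |p.1 i| + ∑ i, |p.2 i|) := by field_simp
      _ ≤ _ := by
        have := Real.pi_le_four
        gcongr
        linarith
  have hfm : ∀ N, AEStronglyMeasurable (f N) ((PG ι).prod (PG ι)) := fun N => by
    have := rotd_cont hM hF (Real.pi / 2 / (N + 1))
    exact Continuous.aestronglyMeasurable (by fun_prop)
  have hgm := aestronglyMeasurable_of_tendsto_ae Filter.atTop hfm hlim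
  have hgi : Integrable g ((PG ι).prod (PG ι)) := by
    refine (exp_bound_int (|l| * M * 2)).mono' hgm ?_
    filter_upwards [hlim] with p hp
    rw [Real.norm_of_nonneg (Real.exp_pos _).le]
    exact le_of_tendsto' hp fun N => hbd N p
  have hconv := tendsto_integral_of_dominated_convergence _ hfm (exp_bound_int (|l| * M * 2))
    (fun N => ae_of_all _ fun p => by
      rw [Real.norm_of_nonneg (Real.exp_pos _).le]; exact hbd N p) hlim
  refine (ge_of_tendsto' hconv fun N => tele hM hF l N).trans ?_
  rw [integral_prod _ hgi]
  have : ∀ᵐ x ∂(PG ι), ∫ y, g (x, y) ∂(PG ι) ≤ Real.exp (2 * l ^ 2 * M ^ 2) := by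
    filter_upwards [hdiff] with x hx
    obtain ⟨a, ha, hs⟩ := hF.fderiv_sq hM x _ hx.hasFDerivAt
    have e : ∀ y, g (x, y) = Real.exp (∑ i, (l * (Real.pi / 2) * a i) * y i) := by
      intro y
      simp only [hg]; rw [ha, Finset.mul_sum]; congr 1
      exact Finset.sum_congr rfl fun i _ => by ring
    simp_rw [e]
    rw [PG_mgf, Real.exp_le_exp]
    simp_rw [mul_pow]
    rw [← Finset.mul_sum]
    have hp : (Real.pi / 2) ^ 2 ≤ 4 := by nlinarith [Real.pi_le_four, Real.pi_pos]
    have : l ^ 2 * (Real.pi / 2) ^ 2 * ∑ i, a i ^ 2 ≤ l ^ 2 * 4 * M ^ 2 := by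
      have : 0 ≤ ∑ i, a i ^ 2 := Finset.sum_nonneg fun i _ => sq_nonneg _
      gcongr
    linarith
  calc _ ≤ ∫ x, Real.exp (2 * l ^ 2 * M ^ 2) ∂(PG ι) := 
        integral_mono_ae hgi.integral_prod_left (integrable_const _) this
    _ = _ := by simp

lemma LipE.exp_int (hM : 0 ≤ M) (hF : LipE M F) (c : ℝ) :
    Integrable (fun x => Real.exp (c * F x)) (PG ι) := by
  have hc := (hF.lip hM).continuous
  refine ((PG_exp_int (ι := ι) (|c| * M)).const_mul (Real.exp (|c| * |F 0|))).mono'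
    (Continuous.aestronglyMeasurable (by fun_prop)) (ae_of_all _ fun x => ?_)
  rw [Real.norm_of_nonneg (Real.exp_pos _).le, ← Real.exp_add, Real.exp_le_exp]
  refine (le_abs_self _).trans ?_
  rw [abs_mul, mul_assoc, ← mul_add]
  refine mul_le_mul_of_nonneg_left ?_ (abs_nonneg _)
  have := hF.l1 hM x 0
  simp only [Pi.zero_apply, sub_zero] at this
  have h2 : |F x| ≤ |F 0| + |F x - F 0| := by
    have := abs_add_le (F 0) (F x - F 0); simpa using this
  linarith

lemma pg_abs_int (k : ι) : Integrable (fun z : ι → ℝ => |z k|) (PG ι) := by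
  classical
  exact (pg_int_coord k).abs

lemma LipE.int (hM : 0 ≤ M) (hF : LipE M F) : Integrable F (PG ι) := by
  have hc := (hF.lip hM).continuous
  have h1 : Integrable (fun x : ι → ℝ => |F 0| + M * ∑ i, |x i|) (PG ι) :=
    (integrable_const _).add ((integrable_finsetSum _ fun i _ => pg_abs_int i).const_mul _)
  refine h1.mono' hc.aestronglyMeasurable (ae_of_all _ fun x => ?_)
  have := hF.l1 hM x 0
  simp only [Pi.zero_apply, sub_zero] at this
  have h2 : |F x| ≤ |F 0| + |F x - F 0| := by
    have := abs_add_le (F 0) (F x - F 0); simpa using this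
  rw [Real.norm_eq_abs]
  linarith

theorem conc (hM : 0 < M) (hF : LipE M F) (s : ℝ) (hs : 0 ≤ s) :
    (PG ι).real {x | F x ≤ ∫ z, F z ∂(PG ι) - s} ≤ Real.exp (-s ^ 2 / (8 * M ^ 2)) := by
  set E := ∫ z, F z ∂(PG ι) with hE
  set l := s / (4 * M ^ 2) with hl
  have hl0 : 0 ≤ l := by positivity
  have hJ : Real.exp (l * E) ≤ ∫ y, Real.exp (l * F y) ∂(PG ι) := by
    have := convexOn_exp.map_integral_le (μ := PG ι) (f := fun y => l * F y)
      Real.continuous_exp.continuousOn isClosed_univ (ae_of_all _ fun _ => trivial)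
      ((hF.int hM.le).const_mul l) (hF.exp_int hM.le l)
    rwa [integral_const_mul] at this
  have hprod : ∫ p, Real.exp (l * (F p.2 - F p.1)) ∂((PG ι).prod (PG ι)) =
      (∫ x, Real.exp (-l * F x) ∂(PG ι)) * ∫ y, Real.exp (l * F y) ∂(PG ι) := by
    rw [← integral_prod_mul]
    congr 1; ext p; rw [← Real.exp_add]; ring_nf
  have h1 := mp_bound hM.le hF l
  rw [hprod] at h1
  have hmgf0 : 0 ≤ ∫ x, Real.exp (-l * F x) ∂(PG ι) := integral_nonneg fun x => (Real.exp_pos _).le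
  have h2 : (∫ x, Real.exp (-l * F x) ∂(PG ι)) * Real.exp (l * E) ≤ Real.exp (2 * l ^ 2 * M ^ 2) :=
    (mul_le_mul_of_nonneg_left hJ hmgf0).trans h1
  have h3 := measure_le_le_exp_mul_mgf (μ := PG ι) (X := F) (E - s) (t := -l) (by linarith)
    (hF.exp_int hM.le (-l))
  refine h3.trans ?_
  unfold mgf
  have h4 : ∫ x, Real.exp (-l * F x) ∂(PG ι) ≤ Real.exp (2 * l ^ 2 * M ^ 2 - l * E) := by
    rw [Real.exp_sub, le_div_iff₀ (Real.exp_pos _)]; exact h2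
  calc _ ≤ Real.exp (- -l * (E - s)) * Real.exp (2 * l ^ 2 * M ^ 2 - l * E) := by gcongr
    _ = _ := by
      rw [← Real.exp_add]; congr 1
      rw [hl]; field_simp; ring
end


lemma PG_inl {α β : Type} [Fintype α] [Fintype β] :
    MeasurePreserving (fun (z : α ⊕ β → ℝ) (i : α) => z (.inl i)) (PG (α ⊕ β)) (PG α) :=
  measurePreserving_fst.comp (measurePreserving_sumPiEquivProdPi (fun _ : α ⊕ β => gaussianReal 0 1))

lemma PG_inr {α β : Type} [Fintype α] [Fintype β] :
    MeasurePreserving (fun (z : α ⊕ β → ℝ) (i : β) => z (.inr i)) (PG (α ⊕ β)) (PG β) :=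
  measurePreserving_snd.comp (measurePreserving_sumPiEquivProdPi (fun _ : α ⊕ β => gaussianReal 0 1))

lemma PG_curry {α β : Type} [Fintype α] [Fintype β] :
    MeasurePreserving (fun (z : α × β → ℝ) (i : α) (j : β) => z (i, j)) (PG (α × β))
      (Measure.pi fun _ : α => PG β) := by
  refine ⟨by fun_prop, ?_⟩
  have := Measure.infinitePi_map_curry (ι := α) (κ := β) (fun _ _ => gaussianReal 0 1)
  simp only [Measure.infinitePi_eq_pi] at this
  exact this

lemma PG_scale {α : Type} [Fintype α] (σ : ℝ) :
    MeasurePreserving (fun (z : α → ℝ) (i : α) => σ * z i) (PG α)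
      (Measure.pi fun _ : α => gaussianReal 0 (σ ^ 2).toNNReal) := by
  refine measurePreserving_pi _ _ fun i => ⟨by fun_prop, ?_⟩
  rw [gaussianReal_map_const_mul]
  congr 1
  · simp
  · ext; simp [Real.coe_toNNReal _ (sq_nonneg σ)]

abbrev KK (m n : ℕ) := (Fin m × Fin n) ⊕ Fin m

def toAv {m n : ℕ} (σ : ℝ) (z : KK m n → ℝ) : (Fin m → Fin n → ℝ) × (Fin m → ℝ) :=
  (fun i j => z (.inl (i, j)), fun i => σ * z (.inr i))

lemma toAv_mp (m n : ℕ) (σ : ℝ) : MeasurePreserving (toAv σ) (PG (KK m n)) (muAv m n σ) :=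
  (PG_curry.prod (PG_scale σ)).comp
    (measurePreserving_sumPiEquivProdPi (fun _ : KK m n => gaussianReal 0 1))

lemma toGH_mp (m n : ℕ) : MeasurePreserving
    (fun z : Fin m ⊕ Fin n → ℝ => ((fun i => z (.inl i), fun j => z (.inr j)) : (Fin m → ℝ) × (Fin n → ℝ)))
    (PG (Fin m ⊕ Fin n)) (muGH m n) :=
  measurePreserving_sumPiEquivProdPi (fun _ : Fin m ⊕ Fin n => gaussianReal 0 1)

lemma e2_sub_le {d : ℕ} (a b : Fin d → ℝ) : |e2norm a - e2norm b| ≤ e2norm (fun i => a i - b i) := by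
  have := abs_norm_sub_norm_le (WithLp.toLp 2 a : EuclideanSpace ℝ (Fin d)) (WithLp.toLp 2 b)
  simpa [EuclideanSpace.norm_eq, e2norm] using this

lemma e2_nonneg {d : ℕ} (a : Fin d → ℝ) : 0 ≤ e2norm a := Real.sqrt_nonneg _

lemma e2_sq {d : ℕ} (a : Fin d → ℝ) : e2norm a ^ 2 = ∑ i, a i ^ 2 :=
  Real.sq_sqrt (Finset.sum_nonneg fun i _ => sq_nonneg _)

section
variable {m n : ℕ}

/-- the constraint set -/
def SS (Cw : ℝ) (xt : Fin n → ℝ) : Set (Fin n → ℝ) :=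
  {w | e2norm w ≤ Cw ∧ l1norm (xt + w) ≤ l1norm xt}

lemma SS_zero {Cw : ℝ} (hCw : 0 < Cw) (xt : Fin n → ℝ) : (0 : Fin n → ℝ) ∈ SS Cw xt := by
  constructor
  · simp [e2norm, hCw.le]
  · simp

def res (σ : ℝ) (w : Fin n → ℝ) (z : KK m n → ℝ) : Fin m → ℝ :=
  fun i => σ * z (.inr i) - ∑ j, z (.inl (i, j)) * w j

noncomputable def Zt (σ Cw : ℝ) (xt : Fin n → ℝ) (z : KK m n → ℝ) : ℝ :=
  ⨅ w : SS Cw xt, e2norm (res σ w.1 z)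

lemma res_lip {σ Cw : ℝ} (hσ : 0 < σ) (hCw : 0 < Cw) (w : Fin n → ℝ) (hw : e2norm w ≤ Cw) :
    LipE (√(Cw ^ 2 + σ ^ 2)) (fun z : KK m n → ℝ => e2norm (res σ w z)) := by
  intro x y
  refine (e2_sub_le _ _).trans ?_
  unfold e2norm
  rw [← Real.sqrt_mul (by positivity)]
  apply Real.sqrt_le_sqrt
  rw [Fintype.sum_sum_type, Fintype.sum_prod_type, ← Finset.sum_add_distrib, Finset.mul_sum]
  refine Finset.sum_le_sum fun i _ => ?_
  set d := x (.inr i) - y (.inr i) with hd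
  set D : Fin n → ℝ := fun j => x (.inl (i, j)) - y (.inl (i, j)) with hD
  have e : res σ w x i - res σ w y i = σ * d - ∑ j, D j * w j := by
    simp only [res, hd, hD, sub_mul, Finset.sum_sub_distrib]; ring
  beta_reduce
  rw [e]
  have hcs := Finset.sum_mul_sq_le_sq_mul_sq Finset.univ D w
  have hwC : ∑ j, w j ^ 2 ≤ Cw ^ 2 := by
    rw [← e2_sq]; exact pow_le_pow_left₀ (e2_nonneg _) hw 2
  have hDn : 0 ≤ ∑ j, D j ^ 2 := Finset.sum_nonneg fun i _ => sq_nonneg _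
  change _ ≤ (Cw ^ 2 + σ ^ 2) * (∑ j, D j ^ 2 + d ^ 2)
  set S := ∑ j, D j * w j
  set P := ∑ j, D j ^ 2
  have h1 : S ^ 2 ≤ P * Cw ^ 2 := hcs.trans (mul_le_mul_of_nonneg_left hwC hDn)
  -- |S| ≤ p Cw with p = sqrt P
  set p := √P with hp
  have hpp : p ^ 2 = P := Real.sq_sqrt hDn
  have hp0 : 0 ≤ p := Real.sqrt_nonneg _
  have h2 : |S| ≤ p * Cw := by
    apply abs_le_of_sq_le_sq _ (by positivity)
    rw [mul_pow, hpp]; exact h1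
  rw [← hpp]
  have h3 := abs_le.1 h2
  have h4 : (σ * d - S) ^ 2 ≤ (σ * |d| + p * Cw) ^ 2 := by
    rw [sq_le_sq, abs_of_nonneg (a := σ * |d| + p * Cw) (by positivity)]
    calc |σ * d - S| ≤ |σ * d| + |S| := abs_sub _ _
      _ ≤ _ := by rw [abs_mul, abs_of_pos hσ]; linarith
  rw [← sq_abs d]
  nlinarith [sq_nonneg (σ * p - Cw * |d|)]

lemma Zt_le {σ Cw : ℝ} {xt : Fin n → ℝ} (w : Fin n → ℝ) (hw : w ∈ SS Cw xt) (z : KK m n → ℝ) :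
    Zt σ Cw xt z ≤ e2norm (res σ w z) :=
  ciInf_le (f := fun w : SS Cw xt => e2norm (res σ w.1 z))
    ⟨0, by rintro _ ⟨w, rfl⟩; exact e2_nonneg _⟩ ⟨w, hw⟩

lemma Zt_lip {σ Cw : ℝ} (hσ : 0 < σ) (hCw : 0 < Cw) (xt : Fin n → ℝ) :
    LipE (√(Cw ^ 2 + σ ^ 2)) (fun z : KK m n → ℝ => Zt σ Cw xt z) := by
  haveI : Nonempty (SS Cw xt) := ⟨⟨0, SS_zero hCw xt⟩⟩
  have key : ∀ x y : KK m n → ℝ, Zt σ Cw xt x - Zt σ Cw xt y ≤ √(Cw ^ 2 + σ ^ 2) * √(∑ i, (x i - y i) ^ 2) := by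
    intro x y
    have : Zt σ Cw xt x - √(Cw ^ 2 + σ ^ 2) * √(∑ i, (x i - y i) ^ 2) ≤ Zt σ Cw xt y := by
      refine le_ciInf fun w => ?_
      have h1 := Zt_le (σ := σ) w.1 w.2 x
      have h2 := (abs_le.1 (res_lip hσ hCw w.1 w.2.1 x y)).2
      simp only at h2
      linarith
    linarith
  intro x y
  rw [abs_le]
  refine ⟨?_, key x y⟩
  have := key y x
  have e : ∑ i, (y i - x i) ^ 2 = ∑ i, (x i - y i) ^ 2 := Finset.sum_congr rfl fun i _ => by ring
  rw [e] at this
  simp only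
  linarith

lemma Zt_nonneg {σ Cw : ℝ} (xt : Fin n → ℝ) (z : KK m n → ℝ) : 0 ≤ Zt σ Cw xt z :=
  Real.iInf_nonneg fun w => e2_nonneg _

lemma Zt_net {σ Cw : ℝ} (hCw : 0 < Cw) (xt : Fin n → ℝ) {W : Type} (pts : W → Fin n → ℝ) {η : ℝ}
    (hη : 0 < η) (hnet : ∀ w ∈ SS Cw xt, ∃ v, ∀ j, |w j - pts v j| ≤ η) (z : KK m n → ℝ) :
    ∃ v, e2norm (res σ (pts v) z) ≤ Zt σ Cw xt z + η * ∑ i, |z i| + η := by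
  haveI : Nonempty (SS Cw xt) := ⟨⟨0, SS_zero hCw xt⟩⟩
  obtain ⟨w, hw⟩ := exists_lt_of_ciInf_lt (show Zt σ Cw xt z < Zt σ Cw xt z + η by linarith)
  obtain ⟨v, hv⟩ := hnet w.1 w.2
  refine ⟨v, ?_⟩
  have h1 := (abs_le.1 (e2_sub_le (res σ (pts v) z) (res σ w.1 z))).2
  have h2 : e2norm (fun i => res σ (pts v) z i - res σ w.1 z i) ≤ η * ∑ i, |z i| := by
    refine (sqrt_sum_le _).trans ?_
    rw [Fintype.sum_sum_type, Fintype.sum_prod_type, mul_add]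
    have : 0 ≤ η * ∑ i : Fin m, |z (.inr i)| := mul_nonneg hη.le (Finset.sum_nonneg fun i _ => abs_nonneg _)
    refine le_trans ?_ (le_add_of_nonneg_right this)
    rw [Finset.mul_sum]
    refine Finset.sum_le_sum fun i _ => ?_
    have e : res σ (pts v) z i - res σ w.1 z i = ∑ j, z (.inl (i, j)) * (w.1 j - pts v j) := by
      simp only [res, mul_sub, Finset.sum_sub_distrib]; ring
    rw [e, Finset.mul_sum]
    refine (Finset.abs_sum_le_sum_abs _ _).trans (Finset.sum_le_sum fun j _ => ?_)
    rw [abs_mul, mul_comm]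
    exact mul_le_mul_of_nonneg_right (hv j) (abs_nonneg _)
  linarith

lemma SS_net {Cw : ℝ} (hCw : 0 < Cw) (xt : Fin n → ℝ) {η : ℝ} (hη : 0 < η) :
    ∃ T : Finset (Fin n → ℝ), T.Nonempty ∧ (∀ v ∈ T, v ∈ SS Cw xt) ∧
      ∀ w ∈ SS Cw xt, ∃ v ∈ T, ∀ j, |w j - v j| ≤ η := by
  have hb : SS Cw xt ⊆ Metric.closedBall 0 Cw := by
    intro w hw
    rw [mem_closedBall_zero_iff, pi_norm_le_iff_of_nonneg hCw.le]
    intro i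
    rw [Real.norm_eq_abs]
    refine le_trans ?_ hw.1
    apply Real.abs_le_sqrt
    exact Finset.single_le_sum (f := fun i => w i ^ 2) (fun _ _ => sq_nonneg _) (Finset.mem_univ i)
  have htb : TotallyBounded (SS Cw xt) := 
    (ProperSpace.isCompact_closedBall (0 : Fin n → ℝ) Cw).totallyBounded.subset hb
  obtain ⟨t, ht1, ht2, ht3⟩ := Metric.finite_approx_of_totallyBounded htb η hη
  refine ⟨ht2.toFinset, ?_, fun v hv => ht1 (by simpa using hv), fun w hw => ?_⟩
  · obtain ⟨v, hv, _⟩ := Set.mem_iUnion₂.1 (ht3 (SS_zero hCw xt))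
    exact ⟨v, by simpa using hv⟩
  · obtain ⟨v, hv, hb⟩ := Set.mem_iUnion₂.1 (ht3 hw)
    refine ⟨v, by simpa using hv, fun j => ?_⟩
    rw [← Real.dist_eq]
    exact (dist_le_pi_dist w v j).trans (Metric.mem_ball.1 hb).le
end


section
variable {m n : ℕ}

abbrev II (m n : ℕ) := KK m n ⊕ ((Fin m ⊕ Fin n) ⊕ Bool)

noncomputable def nw (σ : ℝ) (w : Fin n → ℝ) : ℝ := √(e2norm w ^ 2 + σ ^ 2)

noncomputable def ga0 (σ : ℝ) (w : Fin n → ℝ) (i : Fin m) : II m n → ℝ :=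
  Sum.elim (Sum.elim (fun p => if p.1 = i then -w p.2 else 0) (fun i' => if i' = i then σ else 0))
    (fun _ => 0)
noncomputable def gb0 (m : ℕ) (σ : ℝ) (w : Fin n → ℝ) : II m n → ℝ :=
  Sum.elim (fun _ => 0) (Sum.elim (fun _ => 0) (fun b => if b then nw σ w else 0))
noncomputable def ga1 (σ : ℝ) (w : Fin n → ℝ) (i : Fin m) : II m n → ℝ :=
  Sum.elim (fun _ => 0) (Sum.elim (Sum.elim (fun i' => if i' = i then nw σ w else 0) (fun _ => 0)) 
    (fun _ => 0))
noncomputable def gb1 (m : ℕ) (σ : ℝ) (w : Fin n → ℝ) : II m n → ℝ :=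
  Sum.elim (fun _ => 0) (Sum.elim (Sum.elim (fun _ => 0) w) (fun b => if b then 0 else σ))

lemma nw_sq (σ : ℝ) (w : Fin n → ℝ) : nw σ w * nw σ w = ∑ j, w j * w j + σ ^ 2 := by
  unfold nw
  rw [Real.mul_self_sqrt (by positivity), e2_sq]
  congr 1
  exact Finset.sum_congr rfl fun j _ => by ring

lemma G_le (σ : ℝ) (w v : Fin n → ℝ) : ∑ j, w j * v j + σ ^ 2 ≤ nw σ w * nw σ v := by
  have h1 : ∑ j, w j * v j ≤ e2norm w * e2norm v := Real.sum_mul_le_sqrt_mul_sqrt _ _ _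
  unfold nw
  rw [← Real.sqrt_mul (by positivity)]
  refine (add_le_add_left h1 _).trans ?_
  apply Real.le_sqrt_of_sq_le
  nlinarith [sq_nonneg (σ * e2norm w - σ * e2norm v)]

lemma Xga0 (σ : ℝ) (w : Fin n → ℝ) (i : Fin m) (z : II m n → ℝ) :
    ga0 σ w i ⬝ᵥ z = res σ w (fun k => z (.inl k)) i := by
  simp [ga0, res, dotProduct, Fintype.sum_sum_type, Fintype.sum_prod_type, ite_mul]
  rw [neg_add_eq_sub]
  congr 1
  exact Finset.sum_congr rfl fun j _ => by ring

lemma Xgb0 (σ : ℝ) (w : Fin n → ℝ) (z : II m n → ℝ) :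
    gb0 m σ w ⬝ᵥ z = nw σ w * z (.inr (.inr true)) := by
  simp [gb0, dotProduct, Fintype.sum_sum_type]

lemma Xga1 (σ : ℝ) (w : Fin n → ℝ) (i : Fin m) (z : II m n → ℝ) :
    ga1 σ w i ⬝ᵥ z = nw σ w * z (.inr (.inl (.inl i))) := by
  simp [ga1, dotProduct, Fintype.sum_sum_type]

lemma Xgb1 (σ : ℝ) (w : Fin n → ℝ) (z : II m n → ℝ) :
    gb1 m σ w ⬝ᵥ z = ∑ j, w j * z (.inr (.inl (.inr j))) + σ * z (.inr (.inr false)) := by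
  simp [gb1, dotProduct, Fintype.sum_sum_type]

lemma gordon_inst {W : Type} [Fintype W] [Nonempty W] (pts : W → Fin n → ℝ) (σ : ℝ) {δ β : ℝ} (hδ : 0 < δ)
    (hβ : 0 < β) :
    ∫ z, soft β (Zv δ (fun w i => ga1 σ (pts w) i) (fun w => gb1 m σ (pts w)) z) ∂(PG (II m n)) ≤
    ∫ z, soft β (Zv δ (fun w i => ga0 σ (pts w) i) (fun w => gb0 m σ (pts w)) z) ∂(PG (II m n)) := by
  refine gordon_soft hδ hβ _ _ _ _ (fun w v => ∑ j, pts w j * pts v j + σ ^ 2)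
    (fun w v => nw σ (pts w) * nw σ (pts v)) (fun w v => G_le σ _ _) (fun w => (nw_sq _ _).symm)
    ?_ ?_ ?_ ?_ ?_ ?_ ?_ ?_ ?_ ?_
  · intro w i v j
    rw [Xga0]
    simp only [res, ga0, Sum.elim_inl, Sum.elim_inr]
    by_cases h : i = j
    · simp [h]; rw [add_comm, sq]; congr 1; exact Finset.sum_congr rfl fun j _ => by ring
    · simp [h]
  · intro w i v j
    rw [Xga1]
    simp only [ga1, Sum.elim_inl, Sum.elim_inr]
    simp
  · intro w i v j
    rw [Xga0]; simp [res, ga1]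
  · intro w v; rw [Xgb0]; simp [gb0]
  · intro w v; rw [Xgb1]; simp [gb1, sq]
  · intro w v; rw [Xgb0]; simp [gb1]
  · intro w i v; rw [Xga0]; simp [res, gb0]
  · intro w i v; rw [Xga0]; simp [res, gb1]
  · intro w i v; rw [Xga1]; simp [gb0]
  · intro w i v; rw [Xga1]; simp [gb1]

lemma NN_scale_ge {δ c : ℝ} (hc : 0 ≤ c) (x y : Fin m → ℝ) (h : ∀ i, x i = c * y i) :
    c * e2norm y ≤ NN δ x := by
  unfold NN
  apply Real.le_sqrt_of_sq_le
  rw [mul_pow, e2_sq, Finset.mul_sum]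
  have : ∑ i, x i ^ 2 = ∑ i, c ^ 2 * y i ^ 2 := Finset.sum_congr rfl fun i _ => by rw [h]; ring
  nlinarith [sq_nonneg δ]

lemma xi_le {σ Cw : ℝ} (xt : Fin n → ℝ) (p : (Fin m → ℝ) × (Fin n → ℝ)) (w : Fin n → ℝ)
    (hw : w ∈ SS Cw xt) : xiFun m n σ Cw xt p ≤ nw σ w * e2norm p.1 + ∑ i, p.2 i * w i := by
  unfold xiFun
  refine csInf_le ⟨-(e2norm p.2 * Cw), ?_⟩ ⟨w, hw, rfl⟩
  rintro _ ⟨v, hv, rfl⟩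
  have h1 : 0 ≤ √(e2norm v ^ 2 + σ ^ 2) * e2norm p.1 := mul_nonneg (Real.sqrt_nonneg _) (e2_nonneg _)
  have h2 : ∑ i, (-p.2 i) * v i ≤ e2norm (fun i => -p.2 i) * e2norm v :=
    Real.sum_mul_le_sqrt_mul_sqrt _ _ _
  have h3 : e2norm (fun i => -p.2 i) = e2norm p.2 := by simp [e2norm]
  rw [h3] at h2
  have h4 : e2norm p.2 * e2norm v ≤ e2norm p.2 * Cw := mul_le_mul_of_nonneg_left hv.1 (e2_nonneg _)
  simp only [neg_mul, Finset.sum_neg_distrib] at h2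
  simp only
  linarith

def toGH (z : II m n → ℝ) : (Fin m → ℝ) × (Fin n → ℝ) :=
  (fun i => z (.inr (.inl (.inl i))), fun j => z (.inr (.inl (.inr j))))

lemma toGH2_mp : MeasurePreserving (toGH (m := m) (n := n)) (PG (II m n)) (muGH m n) :=
  (toGH_mp m n).comp (PG_inl.comp PG_inr)

lemma pg_mean {ι : Type} [Fintype ι] (k : ι) : ∫ z, z k ∂(PG ι) = 0 := by
  have h := measurePreserving_eval (fun _ : ι => gaussianReal 0 1) k
  have := integral_map (μ := PG ι) (φ := fun z => z k) (f := fun x : ℝ => x)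
    (measurable_pi_apply k).aemeasurable (by fun_prop)
  rw [← this]
  rw [show Measure.map (fun z : ι → ℝ => z k) (PG ι) = gaussianReal 0 1 from h.map_eq]
  simp

lemma lower {W : Type} [Fintype W] [Nonempty W] (pts : W → Fin n → ℝ) {σ Cw : ℝ} (xt : Fin n → ℝ)
    (hpts : ∀ w, pts w ∈ SS Cw xt) {δ β : ℝ} (hδ : 0 < δ) (hβ : 0 < β)
    (hint : Integrable (xiFun m n σ Cw xt) (muGH m n)) :
    ∫ p, xiFun m n σ Cw xt p ∂(muGH m n) - Real.log (Fintype.card W) / β ≤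
    ∫ z, soft β (Zv δ (fun w i => ga1 σ (pts w) i) (fun w => gb1 m σ (pts w)) z) ∂(PG (II m n)) := by
  have hc : Integrable (fun z => xiFun m n σ Cw xt (toGH z)) (PG (II m n)) :=
    toGH2_mp.integrable_comp_of_integrable hint
  have he : ∫ z, xiFun m n σ Cw xt (toGH z) ∂(PG (II m n)) = ∫ p, xiFun m n σ Cw xt p ∂(muGH m n) := by
    have hmap := (toGH2_mp (m := m) (n := n)).map_eq
    rw [← hmap, integral_map toGH2_mp.measurable.aemeasurable]
    rw [hmap]; exact hint.aestronglyMeasurable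
  have hz : Integrable (fun z : II m n → ℝ => σ * z (.inr (.inr false))) (PG (II m n)) :=
    (pg_int_coord _).const_mul _
  have hpt : ∀ z : II m n → ℝ, xiFun m n σ Cw xt (toGH z) + σ * z (.inr (.inr false))
      - Real.log (Fintype.card W) / β ≤
      soft β (Zv δ (fun w i => ga1 σ (pts w) i) (fun w => gb1 m σ (pts w)) z) := by
    intro z
    refine le_soft hβ _ _ fun w => ?_
    unfold Zv
    have h1 := xi_le (σ := σ) xt (toGH z) (pts w) (hpts w)
    have h2 := NN_scale_ge (δ := δ) (c := nw σ (pts w)) (Real.sqrt_nonneg _)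
      (Xv (fun w i => ga1 σ (pts w) i) w z) (toGH z).1 (fun i => Xga1 _ _ _ _)
    have h3 := Xgb1 (m := m) σ (pts w) z
    have h4 : ∑ i, (toGH z).2 i * pts w i = ∑ j, pts w j * z (.inr (.inl (.inr j))) :=
      Finset.sum_congr rfl fun j _ => mul_comm _ _
    rw [h3]
    linarith
  calc _ = ∫ z : II m n → ℝ, (xiFun m n σ Cw xt (toGH z) + σ * z (.inr (.inr false))
      - Real.log (Fintype.card W) / β) ∂(PG (II m n)) := by
        rw [integral_sub (hc.fun_add hz) (integrable_const _), integral_add hc hz, he, integral_const_mul,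
          pg_mean]
        simp
    _ ≤ _ := integral_mono ((hc.fun_add hz).sub (integrable_const _)) (soft_int hδ hβ _ _) hpt

lemma upper {W : Type} [Fintype W] [Nonempty W] (pts : W → Fin n → ℝ) {σ : ℝ} {δ β : ℝ} (hδ : 0 < δ)
    (hβ : 0 < β) (Q : (II m n → ℝ) → ℝ) (hQ : Integrable Q (PG (II m n)))
    (h : ∀ z : II m n → ℝ, ∃ w, NN δ (res σ (pts w) (fun k => z (.inl k))) ≤ Q z) :
    ∫ z, soft β (Zv δ (fun w i => ga0 σ (pts w) i) (fun w => gb0 m σ (pts w)) z) ∂(PG (II m n)) ≤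
    ∫ z, Q z ∂(PG (II m n)) := by
  set H : (II m n → ℝ) → ℝ := fun z =>
    soft β (Zv δ (fun w i => ga0 σ (pts w) i) (fun w => gb0 m σ (pts w)) z) with hH
  have hHi : Integrable H (PG (II m n)) := soft_int hδ hβ _ _
  let k : II m n := .inr (.inr true)
  have hmp := mp_update k
  have hi : Integrable (fun p : (II m n → ℝ) × ℝ => H (Function.update p.1 k p.2))
      ((PG (II m n)).prod (gaussianReal 0 1)) := hmp.integrable_comp_of_integrable hHi
  have he : ∫ z, H z ∂(PG (II m n)) = ∫ p, H (Function.update p.1 k p.2)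
      ∂((PG (II m n)).prod (gaussianReal 0 1)) := by
    have hmap := hmp.map_eq
    conv_lhs => rw [← hmap]
    rw [integral_map hmp.measurable.aemeasurable]
    rw [hmap]; exact hHi.aestronglyMeasurable
  rw [he, integral_prod _ hi]
  refine integral_mono_ae hi.integral_prod_left hQ ?_
  filter_upwards [hi.prod_right_ae] with z hz
  obtain ⟨w, hw⟩ := h z
  refine le_trans ?_ hw
  have hx : ∀ x, H (Function.update z k x) ≤ NN δ (res σ (pts w) (fun k => z (.inl k))) + nw σ (pts w) * x := by
    intro x
    refine (soft_le hβ _ w).trans (le_of_eq ?_)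
    unfold Zv
    rw [Xgb0]
    congr 1
    · congr 1; ext i; unfold Xv; rw [Xga0]; congr 1
  calc _ ≤ ∫ x, (NN δ (res σ (pts w) (fun k => z (.inl k))) + nw σ (pts w) * x) ∂(gaussianReal 0 1) :=
        integral_mono hz ((integrable_const _).add (gauss_int_id.const_mul _)) hx
    _ = _ := by
        rw [integral_add (integrable_const _) (gauss_int_id.const_mul _), integral_const_mul]
        simp

lemma NN_le_e2 {δ : ℝ} (hδ : 0 < δ) (x : Fin m → ℝ) : NN δ x ≤ e2norm x + δ := by
  unfold NN
  have := e2_nonneg x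
  rw [Real.sqrt_le_left (by positivity), ← e2_sq]
  nlinarith

theorem gordon_E {σ Cw : ℝ} (hσ : 0 < σ) (hCw : 0 < Cw) (xt : Fin n → ℝ) :
    ∫ p, xiFun m n σ Cw xt p ∂(muGH m n) ≤ ∫ z, Zt σ Cw xt z ∂(PG (KK m n)) := by
  by_cases hint : Integrable (xiFun m n σ Cw xt) (muGH m n)
  swap
  · rw [integral_undef hint]
    exact integral_nonneg fun z => Zt_nonneg xt z
  have hL := Zt_lip (m := m) hσ hCw xt
  have hZi := hL.int (Real.sqrt_nonneg _)
  set C := ∫ z, ∑ i, |z i| ∂(PG (KK m n)) with hC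
  have hC0 : 0 ≤ C := integral_nonneg fun z => Finset.sum_nonneg fun i _ => abs_nonneg _
  have hSi : Integrable (fun z : KK m n → ℝ => ∑ i, |z i|) (PG (KK m n)) :=
    integrable_finsetSum _ fun i _ => pg_abs_int i
  have key : ∀ η : ℝ, 0 < η → ∫ p, xiFun m n σ Cw xt p ∂(muGH m n) ≤
      ∫ z, Zt σ Cw xt z ∂(PG (KK m n)) + η * (C + 3) := by
    intro η hη
    obtain ⟨T, hT1, hT2, hT3⟩ := SS_net hCw xt hη
    haveI : Nonempty T := hT1.to_subtype
    set pts : T → Fin n → ℝ := fun w => w.1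
    have hlog : 0 ≤ Real.log (Fintype.card T) := Real.log_natCast_nonneg _
    set β := (Real.log (Fintype.card T) + 1) / η with hβd
    have hβ : 0 < β := by positivity
    have h1 := lower (m := m) (σ := σ) pts xt (fun w => hT2 _ w.2) hη hβ hint
    have h2 := gordon_inst (m := m) pts σ hη hβ
    let Q0 : (KK m n → ℝ) → ℝ := fun z => Zt σ Cw xt z + η * ∑ i, |z i| + η + η
    have hQ0 : Integrable Q0 (PG (KK m n)) :=
      ((hZi.fun_add (hSi.const_mul η)).fun_add (integrable_const η)).add (integrable_const η)
    have hP : MeasurePreserving (fun (z : II m n → ℝ) (i : KK m n) => z (.inl i)) (PG (II m n)) (PG (KK m n)) :=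
      PG_inl
    have h3 := upper (m := m) (σ := σ) pts hη hβ (fun z => Q0 (fun k => z (.inl k)))
      (hP.integrable_comp_of_integrable hQ0) (by
        intro z
        obtain ⟨v, hv⟩ := Zt_net (σ := σ) hCw xt pts hη (fun w hw => by
          obtain ⟨v, hv, hh⟩ := hT3 w hw
          exact ⟨⟨v, hv⟩, hh⟩) (fun k => z (.inl k))
        refine ⟨v, (NN_le_e2 hη _).trans ?_⟩
        simp only [Q0]
        linarith)
    have h4 : ∫ z, Q0 (fun k => z (.inl k)) ∂(PG (II m n)) = ∫ z, Q0 z ∂(PG (KK m n)) := by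
      have hmap := hP.map_eq
      rw [← hmap, integral_map hP.measurable.aemeasurable]
      rw [hmap]; exact hQ0.aestronglyMeasurable
    have h5 : ∫ z, Q0 z ∂(PG (KK m n)) = ∫ z, Zt σ Cw xt z ∂(PG (KK m n)) + η * C + η + η := by
      simp only [Q0]
      rw [integral_add ((hZi.fun_add (hSi.const_mul η)).fun_add (integrable_const η)) (integrable_const η),
        integral_add (hZi.fun_add (hSi.const_mul η)) (integrable_const η),
        integral_add hZi (hSi.const_mul η), integral_const_mul, integral_const]
      simp only [← hC, probReal_univ, one_smul]
    have h6 : Real.log (Fintype.card T) / β ≤ η := by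
      rw [div_le_iff₀ hβ, hβd]
      have : η * ((Real.log (Fintype.card T) + 1) / η) = Real.log (Fintype.card T) + 1 := by field_simp
      rw [this]; linarith
    rw [h4, h5] at h3
    linarith
  refine le_of_forall_pos_le_add fun ε hε => ?_
  have := key (ε / (C + 3)) (by positivity)
  rwa [div_mul_cancel₀ _ (by positivity)] at this
end


section
variable {m n : ℕ}

noncomputable def fromAv (σ : ℝ) (ω : (Fin m → Fin n → ℝ) × (Fin m → ℝ)) : KK m n → ℝ :=
  Sum.elim (fun p => ω.1 p.1 p.2) (fun i => ω.2 i / σ)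

lemma fromAv_toAv {σ : ℝ} (hσ : 0 < σ) (z : KK m n → ℝ) : fromAv σ (toAv σ z) = z := by
  ext k
  rcases k with k | k
  · simp [fromAv, toAv]
  · simp [fromAv, toAv]; field_simp

lemma fromAv_meas (σ : ℝ) : Measurable (fromAv (m := m) (n := n) σ) := by
  rw [measurable_pi_iff]
  rintro (k | k)
  · simp only [fromAv, Sum.elim_inl]; fun_prop
  · simp only [fromAv, Sum.elim_inr]; fun_prop

lemma final_num {a b c L K M r : ℝ} (ha : 0 ≤ a) (hb : 0 ≤ b) (hc : 0 ≤ c) (hM : 0 < M) (hL : M ≤ L)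
    (hr : r = min (a / L) (c / M)) (hK : K = a + b + c) :
    Real.exp (-K ^ 2 / (8 * M ^ 2)) ≤ Real.exp (-a ^ 2 / (2 * L ^ 2)) + Real.exp (-c ^ 2 / (2 * M ^ 2)) := by
  have hL0 : 0 < L := hM.trans_le hL
  have hr0 : 0 ≤ r := by rw [hr]; exact le_min (by positivity) (by positivity)
  have h1 : r * L ≤ a := by
    rw [← le_div_iff₀ hL0, hr]; exact min_le_left _ _
  have h2 : r * M ≤ c := by
    rw [← le_div_iff₀ hM, hr]; exact min_le_right _ _
  have h3 : 2 * (r * M) ≤ K := by nlinarith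
  have h4 : Real.exp (-K ^ 2 / (8 * M ^ 2)) ≤ Real.exp (-r ^ 2 / 2) := by
    rw [Real.exp_le_exp, div_le_div_iff₀ (by positivity) (by positivity)]
    have : (2 * (r * M)) ^ 2 ≤ K ^ 2 := pow_le_pow_left₀ (by positivity) h3 2
    nlinarith
  refine h4.trans ?_
  rcases min_choice (a / L) (c / M) with h | h
  · have : -r ^ 2 / 2 = -a ^ 2 / (2 * L ^ 2) := by rw [hr, h]; field_simp
    rw [this]; exact le_add_of_nonneg_right (Real.exp_pos _).le
  · have : -r ^ 2 / 2 = -c ^ 2 / (2 * M ^ 2) := by rw [hr, h]; field_simp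
    rw [this]; exact le_add_of_nonneg_left (Real.exp_pos _).le
end

theorem lasso_stmt13 (m n k : ℕ) (hm : 1 ≤ m) (hn : 1 ≤ n) (hk1 : 1 ≤ k) (hkn : k ≤ n)
    (xt : Fin n → ℝ) (hxt : kSparseNonneg n k xt)
    (σ Cw εC : ℝ) (hσ : 0 < σ) (hCw : 0 < Cw) (hεC : 0 < εC)
    (hEξ : 0 ≤ ∫ p, xiFun m n σ Cw xt p ∂(muGH m n))
    (hmin : muAv m n σ
        {ω | ∃ xh : Fin n → ℝ, l1norm xh ≤ l1norm xt ∧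
          lassoVal m n xt ω xh = zetaObj m n xt ω ∧ e2norm (xh - xt) ≤ Cw}
      ≥ ENNReal.ofReal (1 - Real.exp (-(εC * n)))) :
    ∀ ε₁ ∈ Set.Ioo (0 : ℝ) 1, ∀ ε₂ ∈ Set.Ioo (0 : ℝ) 1, ∀ ε₃ ∈ Set.Ioo (0 : ℝ) 1,
      muAv m n σ
        {ω | (1 - ε₁) * (∫ p, xiFun m n σ Cw xt p ∂(muGH m n))
              - (ε₂ + ε₃) * Real.sqrt n ≤ zetaObj m n xt ω}
      ≥ ENNReal.ofReal
          (1 - 2 * Real.exp (-(ε₁ * ∫ p, xiFun m n σ Cw xt p ∂(muGH m n)) ^ 2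
                / (2 * (2 * Cw ^ 2 + σ ^ 2)))
            - Real.exp (-(ε₂ ^ 2 * n) / (2 * σ ^ 2))
            - Real.exp (-(ε₃ ^ 2 * n) / (2 * (Cw ^ 2 + σ ^ 2)))
            - Real.exp (-(εC * n))) := by
  intro ε₁ h1 ε₂ h2 ε₃ h3
  have hG := gordon_E (m := m) hσ hCw xt
  set E := ∫ p, xiFun m n σ Cw xt p ∂(muGH m n) with hE
  set M := √(Cw ^ 2 + σ ^ 2) with hMd
  set Lc := √(2 * Cw ^ 2 + σ ^ 2) with hLd
  have hM : 0 < M := Real.sqrt_pos.2 (by positivity)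
  have hM2 : M ^ 2 = Cw ^ 2 + σ ^ 2 := Real.sq_sqrt (by positivity)
  have hL2 : Lc ^ 2 = 2 * Cw ^ 2 + σ ^ 2 := Real.sq_sqrt (by positivity)
  have hML : M ≤ Lc := Real.sqrt_le_sqrt (by nlinarith [sq_nonneg Cw])
  set s := ε₁ * E + ε₂ * √n + ε₃ * √n with hs
  have ha : 0 ≤ ε₁ * E := mul_nonneg h1.1.le hEξ
  have hb : 0 ≤ ε₂ * √n := mul_nonneg h2.1.le (Real.sqrt_nonneg _)
  have hc : 0 ≤ ε₃ * √n := mul_nonneg h3.1.le (Real.sqrt_nonneg _)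
  have hs0 : 0 ≤ s := by positivity
  have hlip := Zt_lip (m := m) hσ hCw xt
  have hconc := conc hM hlip s hs0
  have hZm : Measurable (fun z : KK m n → ℝ => Zt σ Cw xt z) := (hlip.lip hM.le).continuous.measurable
  set T : Set ((Fin m → Fin n → ℝ) × (Fin m → ℝ)) := {ω | Zt σ Cw xt (fromAv σ ω) < E - s} with hT
  have hTm : MeasurableSet T := measurableSet_lt (hZm.comp (fromAv_meas σ)) measurable_const
  have hTle : muAv m n σ T ≤ ENNReal.ofReal (Real.exp (-s ^ 2 / (8 * M ^ 2))) := by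
    rw [← (toAv_mp m n σ).measure_preimage hTm.nullMeasurableSet]
    refine le_trans (measure_mono (t := {x | Zt σ Cw xt x ≤ ∫ z, Zt σ Cw xt z ∂(PG (KK m n)) - s}) ?_) ?_
    · intro z hz
      simp only [hT, Set.mem_preimage, Set.mem_setOf_eq, fromAv_toAv hσ] at hz ⊢
      linarith
    · rw [ENNReal.le_ofReal_iff_toReal_le (measure_ne_top _ _) (Real.exp_pos _).le]
      exact hconc
  have hsub : {ω | ∃ xh : Fin n → ℝ, l1norm xh ≤ l1norm xt ∧
          lassoVal m n xt ω xh = zetaObj m n xt ω ∧ e2norm (xh - xt) ≤ Cw} ⊆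
      {ω | (1 - ε₁) * E - (ε₂ + ε₃) * Real.sqrt n ≤ zetaObj m n xt ω} ∪ T := by
    rintro ω ⟨xh, hx1, hx2, hx3⟩
    by_cases hω : ω ∈ T
    · exact Or.inr hω
    left
    simp only [hT, Set.mem_setOf_eq, not_lt] at hω ⊢
    have h4 := Zt_le (σ := σ) (xh - xt) (⟨hx3, by simpa using hx1⟩ : xh - xt ∈ SS Cw xt) (fromAv σ ω)
    have h5 : e2norm (res σ (xh - xt) (fromAv σ ω)) = lassoVal m n xt ω xh := by
      unfold lassoVal
      congr 1
      ext i
      simp only [res, fromAv, Sum.elim_inl, Sum.elim_inr, Pi.sub_apply, mul_sub, Finset.sum_sub_distrib]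
      field_simp
      ring
    rw [h5, hx2] at h4
    have : (1 - ε₁) * E - (ε₂ + ε₃) * √n = E - s := by rw [hs]; ring
    rw [this]
    exact hω.trans h4
  have hfin := (hmin.le.trans (measure_mono hsub)).trans
    ((measure_union_le _ _).trans (add_le_add_right hTle _))
  rw [← tsub_le_iff_right, ← ENNReal.ofReal_sub _ (Real.exp_pos _).le] at hfin
  refine le_trans (ENNReal.ofReal_le_ofReal ?_) hfin
  have hnum := final_num ha hb hc hM hML rfl hs
  have hn2 : (ε₃ * √n) ^ 2 = ε₃ ^ 2 * n := by
    rw [mul_pow, Real.sq_sqrt (Nat.cast_nonneg _)]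
  rw [hn2, hL2, hM2] at hnum
  rw [hM2]
  have p1 := Real.exp_pos (-(ε₁ * E) ^ 2 / (2 * (2 * Cw ^ 2 + σ ^ 2)))
  have p2 := Real.exp_pos (-(ε₂ ^ 2 * n) / (2 * σ ^ 2))
  linarith
end
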